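/- arXiv:2409.03323 — 2 statements merged into one kernel-verified Lean document; each statement's English description precedes it below -/
import Mathlib

section
/- Let n, r, k be integers with k ≥ 3, r > k, and r ≤ n ≤ 2r−2. Then every n-vertex connected BP_k-free r-uniform multi-hypergraph H satisfies e(H) ≤ k−1. -/
namespace BergeM

def MIsBergePath {n : ℕ} (E : Multiset (Finset (Fin n))) (k : ℕ)
    (v : Fin (k + 1) → Fin n) (f : Fin k → Finset (Fin n)) : Prop :=
  Function.Injective v ∧ (↑(List.ofFn f) : Multiset (Finset (Fin n))) ≤ E ∧
    ∀ i : Fin k, v i.castSucc ∈ f i ∧ v i.succ ∈ f i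

def MHasBergePath {n : ℕ} (E : Multiset (Finset (Fin n))) (k : ℕ) : Prop :=
  ∃ v f, MIsBergePath E k v f

def MBPFree {n : ℕ} (E : Multiset (Finset (Fin n))) (k : ℕ) : Prop :=
  ¬ MHasBergePath E k

def MConnected {n : ℕ} (E : Multiset (Finset (Fin n))) : Prop :=
  ∀ x y : Fin n, ∃ (k : ℕ) (v : Fin (k + 1) → Fin n) (f : Fin k → Finset (Fin n)),
    MIsBergePath E k v f ∧ (∃ i, v i = x) ∧ (∃ i, v i = y)

def MUniform {n : ℕ} (E : Multiset (Finset (Fin n))) (r : ℕ) : Prop :=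
  ∀ e ∈ E, e.card = r

def MIsBergeCycle {n : ℕ} (E : Multiset (Finset (Fin n))) (k : ℕ)
    (v : Fin k → Fin n) (f : Fin k → Finset (Fin n)) : Prop :=
  Function.Injective v ∧ (↑(List.ofFn f) : Multiset (Finset (Fin n))) ≤ E ∧
    ∀ i : Fin k, v i ∈ f i ∧ v ⟨(i.val + 1) % k, Nat.mod_lt _ i.pos⟩ ∈ f i

def MHasBergeCycle {n : ℕ} (E : Multiset (Finset (Fin n))) (k : ℕ) : Prop :=
  ∃ v f, MIsBergeCycle E k v f

def edgeNbhd {n : ℕ} (E : Multiset (Finset (Fin n))) (S : Finset (Fin n)) :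
    Multiset (Finset (Fin n)) :=
  E.filter fun e => (e ∩ S).Nonempty


/-- Incidence between (indices of) hyperedges and vertices. -/
def Inc {ι V : Type*} (e : ι → Finset V) : ι ⊕ V → ι ⊕ V → Prop
  | .inl a, .inr v => v ∈ e a
  | .inr v, .inl a => v ∈ e a
  | _, _ => False

theorem Inc.symm {ι V : Type*} {e : ι → Finset V} {p q : ι ⊕ V} (h : Inc e p q) : Inc e q p := by
  cases p <;> cases q <;> exact h

theorem isChain_inc_reverse {ι V : Type*} {e : ι → Finset V} {L : List (ι ⊕ V)} :
    L.reverse.IsChain (Inc e) ↔ L.IsChain (Inc e) := by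
  rw [List.isChain_reverse]
  exact ⟨fun h => h.imp fun _ _ => Inc.symm, fun h => h.imp fun _ _ => Inc.symm⟩

/-- A path of the incidence graph that starts at the hyperedge `x` and ends at the hyperedge `y`. -/
structure IsEdgePath {ι V : Type*} (e : ι → Finset V) (L : List (ι ⊕ V)) (x y : ι) : Prop where
  nodup : L.Nodup
  chain : L.IsChain (Inc e)
  head : L.head? = some (.inl x)
  last : L.getLast? = some (.inl y)

/-- There is a path through `s + 1` hyperedges and `s` vertices that starts and ends at
hyperedges. -/
def HasEdgePath {ι V : Type*} (e : ι → Finset V) (s : ℕ) : Prop :=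
  ∃ L x y, IsEdgePath e L x y ∧ L.length = 2 * s + 1

namespace IsEdgePath

variable {ι V : Type*} {e : ι → Finset V} {L : List (ι ⊕ V)} {x y f : ι} {s : ℕ}

theorem reverse (h : IsEdgePath e L x y) : IsEdgePath e L.reverse y x where
  nodup := List.nodup_reverse.2 h.nodup
  chain := isChain_inc_reverse.2 h.chain
  head := by simpa using h.last
  last := by simpa using h.head

theorem hasEdgePath_succ_of_head (h : IsEdgePath e L x y) (hL : L.length = 2 * s + 1)
    (hf : .inl f ∉ L) {w : V} (hw : .inr w ∉ L) (hwf : w ∈ e f) (hwx : w ∈ e x) :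
    HasEdgePath e (s + 1) := by
  refine ⟨.inl f :: .inr w :: L, f, y, ⟨?_, ?_, rfl, ?_⟩, by simp [hL]; ring⟩
  · simp [hf, hw, h.nodup]
  · simp [List.isChain_cons, h.chain, h.head, Inc, hwf, hwx]
  · simp [List.getLast?_cons, h.last]

theorem hasEdgePath_succ_of_last (h : IsEdgePath e L x y) (hL : L.length = 2 * s + 1)
    (hf : .inl f ∉ L) {w : V} (hw : .inr w ∉ L) (hwf : w ∈ e f) (hwy : w ∈ e y) :
    HasEdgePath e (s + 1) :=
  h.reverse.hasEdgePath_succ_of_head (by simpa using hL) (by simpa using hf) (by simpa using hw)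
    hwf hwy

/-- Opening a cycle of the incidence graph next to a vertex of the unused hyperedge `f`. -/
theorem hasEdgePath_succ_of_closed (h : IsEdgePath e L x y) (hL : L.length = 2 * s + 1)
    (hf : .inl f ∉ L) (hfx : ∃ u, u ∈ e f ∧ u ∈ e x) {w : V} (hw : .inr w ∉ L)
    (hwx : w ∈ e x) (hwy : w ∈ e y) : HasEdgePath e (s + 1) := by
  obtain ⟨u, huf, hux⟩ := hfx
  by_cases hu : .inr u ∈ L
  swap
  · exact h.hasEdgePath_succ_of_head hL hf hu huf hux
  obtain ⟨A, B, rfl⟩ := List.append_of_mem hu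
  obtain ⟨hn, hc, hh, hl⟩ := h
  have hA : A ≠ [] := by rintro rfl; simp at hh
  have hB : B ≠ [] := by rintro rfl; simp at hl
  obtain ⟨α, hα⟩ := Option.ne_none_iff_exists'.1 (mt List.getLast?_eq_none_iff.1 hA)
  obtain ⟨β, hβ⟩ := Option.ne_none_iff_exists'.1 (mt List.getLast?_eq_none_iff.1 hB)
  obtain ⟨δ, hδ⟩ := Option.ne_none_iff_exists'.1 (mt List.head?_eq_none_iff.1 hB)
  obtain ⟨γ, hγ⟩ := Option.ne_none_iff_exists'.1 (mt List.head?_eq_none_iff.1 hA)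
  simp only [List.head?_append, hγ, Option.some_or, Option.some.injEq] at hh
  simp only [List.getLast?_append, List.getLast?_cons, hβ, Option.some_or, Option.some.injEq,
    Option.getD_some] at hl
  subst hh hl
  simp only [List.isChain_append, List.isChain_cons, hα] at hc
  obtain ⟨hcA, ⟨hcu, hcB⟩, hcAu⟩ := hc
  have hαu : Inc e α (.inr u) := hcAu _ rfl _ rfl
  rcases α with z | z
  swap
  · exact hαu.elim
  refine ⟨.inl f :: .inr u :: (B ++ .inr w :: A), f, z, ⟨?_, ?_, rfl, ?_⟩, ?_⟩
  · have hp : (.inl f :: .inr u :: (B ++ .inr w :: A)).Perm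
        (.inl f :: .inr w :: (A ++ .inr u :: B)) := by
      let := Classical.decEq (ι ⊕ V)
      refine (@List.perm_iff_count _ instBEqOfDecidableEq _ _ _).2 fun c => ?_
      simp [List.count_cons]
      omega
    rw [hp.nodup_iff]
    simp only [List.nodup_cons, hn]
    simp_all
  · simp only [List.isChain_append, List.isChain_cons, hβ, hγ, hcA, hcB]
    simpa [Inc, huf, hwx, hwy, hδ] using hcu
  · simp [List.getLast?_cons, List.getLast?_append, hα]
  · simp at hL ⊢; omega

end IsEdgePath

theorem drop_eq_cons_of_getElem_eq {α : Type*} {L : List α} {i : ℕ} {c : α} (h : L[i]? = some c) :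
    L.drop i = c :: L.drop (i + 1) := by
  obtain ⟨hi, rfl⟩ := List.getElem?_eq_some_iff.1 h
  exact List.drop_eq_getElem_cons hi

theorem eq_take_append_cons_drop {α : Type*} {L : List α} {i : ℕ} {c : α} (h : L[i]? = some c) :
    L = L.take i ++ c :: L.drop (i + 1) := by
  rw [← drop_eq_cons_of_getElem_eq h, List.take_append_drop]

namespace IsEdgePath

variable {ι V : Type*} {e : ι → Finset V} {L : List (ι ⊕ V)} {x y f : ι} {s : ℕ}

theorem exists_perm_head {a : ι} {u w : V} {A B : List (ι ⊕ V)}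
    (h : IsEdgePath e (A ++ .inr u :: .inl a :: .inr w :: B) x y) (hu : u ∈ e y) :
    ∃ L', L'.Perm (A ++ .inr u :: .inl a :: .inr w :: B) ∧ IsEdgePath e L' a x := by
  have hp : (.inl a :: .inr w :: (B ++ .inr u :: A.reverse)).Perm
      (A ++ .inr u :: .inl a :: .inr w :: B) := by
    let := Classical.decEq (ι ⊕ V)
    refine (@List.perm_iff_count _ instBEqOfDecidableEq _ _ _).2 fun c => ?_
    simp [List.count_cons]
    omega
  refine ⟨_, hp, hp.nodup_iff.2 h.nodup, ?_, rfl, ?_⟩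
  all_goals
    obtain ⟨-, hc, hh, hl⟩ := h
    have hA : A ≠ [] := by rintro rfl; simp at hh
    have hB : B ≠ [] := by rintro rfl; simp at hl
    obtain ⟨α, hα⟩ := Option.ne_none_iff_exists'.1 (mt List.getLast?_eq_none_iff.1 hA)
    obtain ⟨β, hβ⟩ := Option.ne_none_iff_exists'.1 (mt List.getLast?_eq_none_iff.1 hB)
    obtain ⟨γ, hγ⟩ := Option.ne_none_iff_exists'.1 (mt List.head?_eq_none_iff.1 hA)
    obtain ⟨δ, hδ⟩ := Option.ne_none_iff_exists'.1 (mt List.head?_eq_none_iff.1 hB)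
    simp only [List.head?_append, hγ, Option.some_or, Option.some.injEq] at hh
    simp only [List.getLast?_append, List.getLast?_cons, hβ, Option.some_or, Option.some.injEq,
      Option.getD_some] at hl
    subst hh hl
  · simp [List.isChain_append, List.isChain_cons, hα, hδ] at hc
    obtain ⟨hcA, ⟨hua, haw, hwB, hcB⟩, hαu⟩ := hc
    simp [List.isChain_append, List.isChain_cons, isChain_inc_reverse, hα, hβ, hδ, haw, hwB, hcB,
      hcA, hαu.symm]
    exact hu
  · simp [List.getLast?_append, List.getLast?_cons, hγ]

theorem exists_perm_last {a : ι} {u w : V} {A B : List (ι ⊕ V)}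
    (h : IsEdgePath e (A ++ .inr u :: .inl a :: .inr w :: B) x y) (hw : w ∈ e x) :
    ∃ L', L'.Perm (A ++ .inr u :: .inl a :: .inr w :: B) ∧ IsEdgePath e L' a y := by
  have h' : IsEdgePath e (B.reverse ++ .inr w :: .inl a :: .inr u :: A.reverse) y x := by
    simpa using h.reverse
  obtain ⟨L', hp, hL'⟩ := h'.exists_perm_head hw
  refine ⟨L', hp.trans ?_, hL'⟩
  convert List.reverse_perm (A ++ .inr u :: .inl a :: .inr w :: B) using 1
  simp

theorem exists_perm_pair {a b : ι} {u u' w w' : V} {A M B : List (ι ⊕ V)}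
    (h : IsEdgePath e (A ++ .inr u :: .inl a :: (M ++ .inl b :: .inr w' :: B)) x y)
    (hM : M.head? = some (.inr w)) (hM' : M.getLast? = some (.inr u')) (hw : w ∈ e x)
    (hu' : u' ∈ e y) :
    ∃ L', L'.Perm (A ++ .inr u :: .inl a :: (M ++ .inl b :: .inr w' :: B)) ∧
      IsEdgePath e L' a b := by
  have hp : (.inl a :: .inr u :: (A.reverse ++ M ++ B.reverse ++ [.inr w', .inl b])).Perm
      (A ++ .inr u :: .inl a :: (M ++ .inl b :: .inr w' :: B)) := by
    let := Classical.decEq (ι ⊕ V)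
    refine (@List.perm_iff_count _ instBEqOfDecidableEq _ _ _).2 fun c => ?_
    simp [List.count_cons]
    omega
  refine ⟨_, hp, hp.nodup_iff.2 h.nodup, ?_, rfl, by simp [List.getLast?_cons]⟩
  obtain ⟨-, hc, hh, hl⟩ := h
  have hA : A ≠ [] := by rintro rfl; simp at hh
  have hB : B ≠ [] := by rintro rfl; simp [List.getLast?_cons] at hl
  obtain ⟨α, hα⟩ := Option.ne_none_iff_exists'.1 (mt List.getLast?_eq_none_iff.1 hA)
  obtain ⟨β, hβ⟩ := Option.ne_none_iff_exists'.1 (mt List.getLast?_eq_none_iff.1 hB)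
  obtain ⟨γ, hγ⟩ := Option.ne_none_iff_exists'.1 (mt List.head?_eq_none_iff.1 hA)
  obtain ⟨δ, hδ⟩ := Option.ne_none_iff_exists'.1 (mt List.head?_eq_none_iff.1 hB)
  simp only [List.head?_append, hγ, Option.some_or, Option.some.injEq] at hh
  simp only [List.getLast?_append, List.getLast?_cons, hβ, Option.some_or, Option.some.injEq,
    Option.getD_some] at hl
  subst hh hl
  simp [List.isChain_append, List.isChain_cons, hα, hδ, hM, hM'] at hc
  obtain ⟨hcA, ⟨hua, -, hcM, ⟨hbw, hwB, hcB⟩, -⟩, hαu⟩ := hc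
  simp [List.isChain_append, List.isChain_cons, isChain_inc_reverse, hα, hβ, hγ, hδ, hM, hM', hcA,
    hcM, hcB, hαu.symm, hua.symm, hbw.symm, hwB.symm]
  exact And.intro hu' hw

/-- Outside a longest path, the first, the last and an unused hyperedge are pairwise disjoint. -/
theorem disjoint_sdiff [DecidableEq V] (hmeet : ∀ a b, ∃ u, u ∈ e a ∧ u ∈ e b)
    (hmax : ¬ HasEdgePath e (s + 1)) (hL : L.length = 2 * s + 1) (hf : .inl f ∉ L)
    {I : Finset V} (hI : ∀ w, w ∈ I ↔ .inr w ∈ L) {L' : List (ι ⊕ V)} (hp : L'.Perm L)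
    (h : IsEdgePath e L' x y) :
    Disjoint (e x \ I) (e y \ I) ∧ Disjoint (e f \ I) (e x \ I) ∧
      Disjoint (e f \ I) (e y \ I) := by
  rw [← hp.length_eq] at hL
  rw [← hp.mem_iff] at hf
  simp only [← hp.mem_iff] at hI
  simp only [Finset.disjoint_left, Finset.mem_sdiff, hI]
  exact ⟨fun w hw hw' =>
      hmax (h.hasEdgePath_succ_of_closed hL hf (hmeet f x) hw.2 hw.1 hw'.1),
    fun w hw hw' => hmax (h.hasEdgePath_succ_of_head hL hf hw.2 hw.1 hw'.1),
    fun w hw hw' => hmax (h.hasEdgePath_succ_of_last hL hf hw.2 hw.1 hw'.1)⟩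

/-- The hyperedges and vertices of a path in the order in which they occur. -/
theorem exists_seq [Nonempty V] (h : IsEdgePath e L x y) (hL : L.length = 2 * s + 1) :
    ∃ (a : ℕ → ι) (v : ℕ → V), (∀ p ≤ s, L[2 * p]? = some (.inl (a p))) ∧
      ∀ p < s, L[2 * p + 1]? = some (.inr (v p)) := by
  have hc := List.isChain_iff_getElem.1 h.chain
  have heven : ∀ p ≤ s, ∃ a, L[2 * p]? = some (.inl a) := by
    intro p
    induction p with
    | zero => exact fun _ => ⟨x, by simpa [List.head?_eq_getElem?] using h.head⟩
    | succ p ih =>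
      intro hp
      obtain ⟨a, ha⟩ := ih (by omega)
      obtain ⟨_, ha⟩ := List.getElem?_eq_some_iff.1 ha
      have h1 := hc (2 * p) (by omega)
      have h2 := hc (2 * p + 1) (by omega)
      rw [ha] at h1
      rw [show 2 * (p + 1) = 2 * p + 1 + 1 by ring, List.getElem?_eq_getElem (by omega)]
      cases h3 : L[2 * p + 1] <;> rw [h3] at h1 h2
      · exact h1.elim
      cases h4 : L[2 * p + 1 + 1] <;> rw [h4] at h2
      · exact ⟨_, rfl⟩
      · exact h2.elim
  have hodd : ∀ p, ∃ v, p < s → L[2 * p + 1]? = some (.inr v) := by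
    intro p
    by_cases hp : p < s
    swap
    · exact ⟨Classical.arbitrary V, fun h => (hp h).elim⟩
    obtain ⟨a, ha⟩ := heven p hp.le
    obtain ⟨_, ha⟩ := List.getElem?_eq_some_iff.1 ha
    have h1 := hc (2 * p) (by omega)
    rw [ha] at h1
    rw [List.getElem?_eq_getElem (by omega)]
    cases h3 : L[2 * p + 1] <;> rw [h3] at h1
    · exact h1.elim
    · exact ⟨_, fun _ => rfl⟩
  have heven' : ∀ p, ∃ a, p ≤ s → L[2 * p]? = some (.inl a) := fun p => by
    by_cases hp : p ≤ s
    · exact (heven p hp).imp fun _ h _ => h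
    · exact ⟨x, fun h => (hp h).elim⟩
  choose a ha using heven'
  choose v hv using hodd
  exact ⟨a, v, ha, hv⟩

end IsEdgePath

section Extension

variable {ι V : Type*} [Fintype V] {e : ι → Finset V} {r : ℕ}

theorem exists_mem_mem_of_card (hr : ∀ a, (e a).card = r) (hn : Fintype.card V + 2 ≤ 2 * r)
    (a b : ι) : ∃ u, u ∈ e a ∧ u ∈ e b := by
  classical
  have h1 := Finset.card_union_add_card_inter (e a) (e b)
  have h2 := Finset.card_le_univ (e a ∪ e b)
  rw [hr, hr] at h1
  obtain ⟨u, hu⟩ := Finset.card_pos.1 (show 0 < (e a ∩ e b).card by omega)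
  exact ⟨u, Finset.mem_inter.1 hu⟩

theorem HasEdgePath.succ [Fintype ι] {s : ℕ} (hr : ∀ a, (e a).card = r)
    (hn : Fintype.card V + 2 ≤ 2 * r) (hs : s + 3 ≤ r) (hι : s + 1 < Fintype.card ι)
    (h : HasEdgePath e s) : HasEdgePath e (s + 1) := by
  classical
  by_contra hmax
  obtain ⟨L, x, y, h, hL⟩ := h
  have hmeet := exists_mem_mem_of_card hr hn
  have : Nonempty V := ⟨(hmeet x x).choose⟩
  obtain ⟨a, v, ha, hv⟩ := h.exists_seq hL
  have hx : x = a 0 := by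
    have := h.head
    rw [List.head?_eq_getElem?] at this
    simpa using this.symm.trans (ha 0 (by omega))
  have hy : y = a s := by
    have := h.last
    rw [List.getLast?_eq_getElem?, hL] at this
    simpa using this.symm.trans (ha s le_rfl)
  subst hx hy
  have hvinj : ∀ p < s, ∀ q < s, v p = v q → p = q := by
    intro p hp q hq hpq
    have := (List.getElem?_inj (i := 2 * p + 1) (j := 2 * q + 1) (by omega) h.nodup).1
      (by rw [hv p hp, hv q hq, hpq])
    omega
  set I : Finset V := (Finset.range s).image v with hIdef
  have hIcard : I.card = s := by
    rw [Finset.card_image_of_injOn, Finset.card_range]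
    intro p hp q hq
    exact hvinj p (by simpa using hp) q (by simpa using hq)
  have hI : ∀ w, w ∈ I ↔ .inr w ∈ L := by
    intro w
    simp only [hIdef, Finset.mem_image, Finset.mem_range]
    constructor
    · rintro ⟨p, hp, rfl⟩
      exact List.mem_of_getElem? (hv p hp)
    · intro hw
      obtain ⟨i, hi⟩ := List.mem_iff_getElem?.1 hw
      have hlt := (List.getElem?_eq_some_iff.1 hi).1
      obtain ⟨p, rfl | rfl⟩ := Nat.even_or_odd' i
      · simp [ha p (by omega)] at hi
      · exact ⟨p, by omega, by simpa [hv p (by omega)] using hi⟩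
  obtain ⟨f, hf⟩ : ∃ f, .inl f ∉ L := by
    by_contra! hall
    have hsub : (Finset.univ : Finset ι) ⊆ (Finset.range (s + 1)).image a := by
      intro c _
      obtain ⟨i, hi⟩ := List.mem_iff_getElem?.1 (hall c)
      have hlt := (List.getElem?_eq_some_iff.1 hi).1
      obtain ⟨p, rfl | rfl⟩ := Nat.even_or_odd' i
      · exact Finset.mem_image.2 ⟨p, by simp; omega, by simpa [ha p (by omega)] using hi⟩
      · simp [hv p (by omega)] at hi
    have h1 := Finset.card_le_card hsub
    have h2 := Finset.card_image_le (s := Finset.range (s + 1)) (f := a)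
    rw [Finset.card_univ] at h1
    rw [Finset.card_range] at h2
    omega
  have hdisj {L' : List (ι ⊕ V)} {x y : ι} (hp : L'.Perm L) (h' : IsEdgePath e L' x y) :=
    h'.disjoint_sdiff hmeet hmax hL hf hI hp
  obtain ⟨hd1, hd2, hd3⟩ := hdisj (.refl _) h
  set J : Finset ℕ := (Finset.range (s - 1)).filter
    fun p => v (p + 1) ∈ e (a 0) ∧ v p ∈ e (a s) with hJdef
  have hJ (p : ℕ) (hp : p ∈ J) : p + 1 < s ∧ v (p + 1) ∈ e (a 0) ∧ v p ∈ e (a s) := by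
    simp only [hJdef, Finset.mem_filter, Finset.mem_range] at hp
    exact ⟨by omega, hp.2⟩
  have hsplit (p : ℕ) (hp : p + 1 < s) : L = L.take (2 * p + 1) ++ .inr (v p) ::
      .inl (a (p + 1)) :: .inr (v (p + 1)) :: L.drop (2 * p + 4) := by
    have h1 := eq_take_append_cons_drop (hv p (by omega))
    have h2 : L.drop (2 * p + 2) = .inl (a (p + 1)) :: L.drop (2 * p + 3) :=
        drop_eq_cons_of_getElem_eq (ha (p + 1) (by omega))
    have h3 : L.drop (2 * p + 3) = .inr (v (p + 1)) :: L.drop (2 * p + 4) :=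
        drop_eq_cons_of_getElem_eq (hv (p + 1) (by omega))
    rwa [h2, h3] at h1
  have hJd (p : ℕ) (hp : p ∈ J) : Disjoint (e f \ I) (e (a (p + 1)) \ I) ∧
      Disjoint (e (a 0) \ I) (e (a (p + 1)) \ I) ∧ Disjoint (e (a s) \ I) (e (a (p + 1)) \ I) := by
    obtain ⟨hps, hp0, hp1⟩ := hJ p hp
    have hLp := hsplit p hps
    have h' := h
    rw [hLp] at h'
    obtain ⟨L₁, hp₁, hL₁⟩ := h'.exists_perm_head hp1
    obtain ⟨L₂, hp₂, hL₂⟩ := h'.exists_perm_last hp0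
    rw [← hLp] at hp₁ hp₂
    exact ⟨(hdisj hp₁ hL₁).2.1, (hdisj hp₁ hL₁).1.symm, (hdisj hp₂ hL₂).1.symm⟩
  have hJlt (p q : ℕ) (hp : p ∈ J) (hq : q ∈ J) (hpq : p < q) :
      Disjoint (e (a (p + 1)) \ I) (e (a (q + 1)) \ I) := by
    obtain ⟨hps, hp0, -⟩ := hJ p hp
    obtain ⟨hqs, -, hq1⟩ := hJ q hq
    set M := (L.drop (2 * p + 3)).take (2 * (q - p) - 1) with hM
    have hLpq : L = L.take (2 * p + 1) ++ .inr (v p) :: .inl (a (p + 1)) ::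
        (M ++ .inl (a (q + 1)) :: .inr (v (q + 1)) :: L.drop (2 * q + 4)) := by
      have h1 := eq_take_append_cons_drop (hv p (by omega))
      have h2 : L.drop (2 * p + 2) = .inl (a (p + 1)) :: L.drop (2 * p + 3) :=
        drop_eq_cons_of_getElem_eq (ha (p + 1) (by omega))
      have h3 := List.take_append_drop (2 * (q - p) - 1) (L.drop (2 * p + 3))
      have h4 : L.drop (2 * q + 2) = .inl (a (q + 1)) :: L.drop (2 * q + 3) :=
        drop_eq_cons_of_getElem_eq (ha (q + 1) (by omega))
      have h5 : L.drop (2 * q + 3) = .inr (v (q + 1)) :: L.drop (2 * q + 4) :=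
        drop_eq_cons_of_getElem_eq (hv (q + 1) (by omega))
      rw [List.drop_drop, show 2 * p + 3 + (2 * (q - p) - 1) = 2 * q + 2 by omega, h4, h5] at h3
      rwa [h2, ← h3] at h1
    have hMh : M.head? = some (.inr (v (p + 1))) := by
      rw [hM, List.head?_take, if_neg (by omega), List.head?_drop, ← hv (p + 1) hps]
      rfl
    have hMl : M.getLast? = some (.inr (v q)) := by
      rw [hM, List.getLast?_take, if_neg (by omega), List.getElem?_drop,
        show 2 * p + 3 + (2 * (q - p) - 1 - 1) = 2 * q + 1 by omega, hv q (by omega)]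
      rfl
    have h' := h
    rw [hLpq] at h'
    obtain ⟨L', hp', hL'⟩ := h'.exists_perm_pair hMh hMl hp0 hq1
    rw [← hLpq] at hp'
    exact (hdisj hp' hL').1
  have hcardJ : s - 1 ≤ J.card + (I \ e (a 0)).card + (I \ e (a s)).card := by
    set J₀ := (Finset.range (s - 1)).filter fun p => v (p + 1) ∉ e (a 0) with hJ₀
    set J₁ := (Finset.range (s - 1)).filter fun p => v p ∉ e (a s) with hJ₁
    have h0 : J₀.card ≤ (I \ e (a 0)).card := by
      refine Finset.card_le_card_of_injOn (fun p => v (p + 1)) (fun p hp => ?_)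
        (fun p hp q hq hpq => ?_)
      · simp only [hJ₀, Finset.coe_filter, Set.mem_ofPred_eq, Finset.mem_range] at hp
        exact Finset.mem_coe.2 (Finset.mem_sdiff.2
          ⟨Finset.mem_image_of_mem v (Finset.mem_range.2 (by omega)), hp.2⟩)
      · simp only [hJ₀, Finset.coe_filter, Set.mem_ofPred_eq, Finset.mem_range] at hp hq
        have := hvinj (p + 1) (by omega) (q + 1) (by omega) hpq
        omega
    have h1 : J₁.card ≤ (I \ e (a s)).card := by
      refine Finset.card_le_card_of_injOn v (fun p hp => ?_) (fun p hp q hq hpq => ?_)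
      · simp only [hJ₁, Finset.coe_filter, Set.mem_ofPred_eq, Finset.mem_range] at hp
        exact Finset.mem_coe.2 (Finset.mem_sdiff.2
          ⟨Finset.mem_image_of_mem v (Finset.mem_range.2 (by omega)), hp.2⟩)
      · simp only [hJ₁, Finset.coe_filter, Set.mem_ofPred_eq, Finset.mem_range] at hp hq
        exact hvinj p (by omega) q (by omega) hpq
    have hsub : Finset.range (s - 1) ⊆ J ∪ J₀ ∪ J₁ := by
      intro p hp
      simp only [hJdef, hJ₀, hJ₁, Finset.mem_union, Finset.mem_filter]
      tauto
    have h2 := Finset.card_le_card hsub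
    have h3 := Finset.card_union_le (J ∪ J₀) J₁
    have h4 := Finset.card_union_le J J₀
    rw [Finset.card_range] at h2
    omega
  set K := J.biUnion fun p => e (a (p + 1)) \ I with hK
  have hsdiff (c : ι) : (e c \ I).card + s = r + (I \ e c).card := by
    have h1 := Finset.card_sdiff_add_card_inter (e c) I
    have h2 := Finset.card_sdiff_add_card_inter I (e c)
    rw [Finset.inter_comm, hIcard] at h2
    rw [hr] at h1
    omega
  have hKcard : J.card ≤ K.card := by
    rw [hK, Finset.card_biUnion]
    · rw [Finset.card_eq_sum_ones]
      refine Finset.sum_le_sum fun p _ => ?_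
      have := hsdiff (a (p + 1))
      omega
    · intro p hp q hq hpq
      rcases lt_or_gt_of_ne hpq with hlt | hlt
      · exact hJlt p q hp hq hlt
      · exact (hJlt q p hq hp hlt).symm
  have hKd : Disjoint (e f \ I ∪ e (a 0) \ I ∪ e (a s) \ I) K := by
    rw [hK, Finset.disjoint_biUnion_right]
    intro p hp
    obtain ⟨h1, h2, h3⟩ := hJd p hp
    exact Finset.disjoint_union_left.2 ⟨Finset.disjoint_union_left.2 ⟨h1, h2⟩, h3⟩
  have hsub : e f \ I ∪ e (a 0) \ I ∪ e (a s) \ I ∪ K ⊆ Iᶜ := by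
    intro w hw
    simp only [hK, Finset.mem_union, Finset.mem_biUnion, Finset.mem_sdiff] at hw
    rw [Finset.mem_compl]
    rcases hw with ((hw | hw) | hw) | ⟨_, -, hw⟩ <;> exact hw.2
  have hle := Finset.card_le_card hsub
  rw [Finset.card_union_of_disjoint hKd,
    Finset.card_union_of_disjoint (Finset.disjoint_union_left.2 ⟨hd3, hd1⟩),
    Finset.card_union_of_disjoint hd2, Finset.card_compl, hIcard] at hle
  have := hsdiff f
  have := hsdiff (a 0)
  have := hsdiff (a s)
  omega

theorem hasEdgePath_of_card [Fintype ι] (hr : ∀ a, (e a).card = r)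
    (hn : Fintype.card V + 2 ≤ 2 * r) {s : ℕ} (hs : s + 2 ≤ r) (hι : s < Fintype.card ι) :
    HasEdgePath e s := by
  induction s with
  | zero =>
    obtain ⟨x⟩ := Fintype.card_pos_iff.1 hι
    exact ⟨[.inl x], x, x, ⟨by simp, by simp, rfl, rfl⟩, rfl⟩
  | succ s ih => exact (ih (by omega) (by omega)).succ hr hn (by omega) hι

end Extension

theorem HasEdgePath.exists_berge_path {ι V : Type*} {e : ι → Finset V} {s : ℕ}
    (h : HasEdgePath e s) (hr : ∀ a, s + 2 ≤ (e a).card) :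
    ∃ (v : Fin (s + 2) → V) (a : Fin (s + 1) → ι), Function.Injective v ∧ Function.Injective a ∧
      ∀ i, v i.castSucc ∈ e (a i) ∧ v i.succ ∈ e (a i) := by
  classical
  obtain ⟨L, x, y, h, hL⟩ := h
  have : Nonempty V := by
    obtain ⟨w, -⟩ := Finset.card_pos.1 (show 0 < (e x).card by have := hr x; omega)
    exact ⟨w⟩
  obtain ⟨a, v, ha, hv⟩ := h.exists_seq hL
  have hainj : ∀ p ≤ s, ∀ q ≤ s, a p = a q → p = q := by
    intro p hp q hq hpq
    have := (List.getElem?_inj (i := 2 * p) (j := 2 * q) (by omega) h.nodup).1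
      (by rw [ha p hp, ha q hq, hpq])
    omega
  have hvinj : ∀ p < s, ∀ q < s, v p = v q → p = q := by
    intro p hp q hq hpq
    have := (List.getElem?_inj (i := 2 * p + 1) (j := 2 * q + 1) (by omega) h.nodup).1
      (by rw [hv p hp, hv q hq, hpq])
    omega
  have hc := List.isChain_iff_getElem.1 h.chain
  have hva : ∀ p < s, v p ∈ e (a p) ∧ v p ∈ e (a (p + 1)) := by
    intro p hp
    have h1 := hc (2 * p) (by omega)
    have h2 := hc (2 * p + 1) (by omega)
    rw [(List.getElem?_eq_some_iff.1 (hv p hp)).2] at h1 h2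
    rw [(List.getElem?_eq_some_iff.1 (ha p hp.le)).2] at h1
    have h3 : L[2 * p + 1 + 1] = .inl (a (p + 1)) :=
      (List.getElem?_eq_some_iff.1 (ha (p + 1) hp)).2
    rw [h3] at h2
    exact ⟨h1, h2⟩
  have hI : ((Finset.range s).image v).card ≤ s := by
    simpa using Finset.card_image_le (s := Finset.range s) (f := v)
  obtain ⟨b, hb, hbI⟩ := Finset.exists_mem_notMem_of_card_lt_card
    (s := (Finset.range s).image v) (t := e (a 0)) (by have := hr (a 0); omega)
  obtain ⟨c, hc, hcI⟩ := Finset.exists_mem_notMem_of_card_lt_card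
    (s := insert b ((Finset.range s).image v)) (t := e (a s)) (by
      have := hr (a s)
      have := Finset.card_insert_le b ((Finset.range s).image v)
      omega)
  simp only [Finset.mem_insert, Finset.mem_image, Finset.mem_range, not_or, not_exists,
    not_and] at hbI hcI
  refine ⟨fun i => if i.val = 0 then b else if i.val = s + 1 then c else v (i.val - 1),
    fun i => a i, ?_, ?_, ?_⟩
  · rintro ⟨i, hi⟩ ⟨j, hj⟩ hij
    simp only [Fin.mk.injEq] at hij ⊢
    split_ifs at hij with h1 h2 h3 h4 h5 h6 h7 h8
    any_goals omega
    · exact (hcI.1 hij.symm).elim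
    · exact (hbI (j - 1) (by omega) hij.symm).elim
    · exact (hcI.1 hij).elim
    · exact (hcI.2 (j - 1) (by omega) hij.symm).elim
    · exact (hbI (i - 1) (by omega) hij).elim
    · exact (hcI.2 (i - 1) (by omega) hij).elim
    · have := hvinj (i - 1) (by omega) (j - 1) (by omega) hij
      omega
  · intro i j hij
    exact Fin.ext (hainj i (by omega) j (by omega) hij)
  · rintro ⟨i, hi⟩
    simp only [Fin.castSucc_mk, Fin.succ_mk, Nat.add_sub_cancel, Nat.succ_ne_zero, if_false]
    constructor
    · split_ifs with h1 h2
      · exact h1 ▸ hb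
      · omega
      · have := (hva (i - 1) (by omega)).2
        rwa [Nat.sub_add_cancel (by omega)] at this
    · split_ifs with h1
      · rwa [show i = s by omega]
      · exact (hva i (by omega)).1

theorem stmt8 (n r k : ℕ) (hk : 3 ≤ k) (hrk : k < r) (hn1 : r ≤ n) (hn2 : n ≤ 2 * r - 2)
    (E : Multiset (Finset (Fin n))) (hu : MUniform E r) (hc : MConnected E)
    (hf : MBPFree E k) : Multiset.card E ≤ k - 1 := by
  by_contra! hlt
  have hr (i : Fin E.toList.length) : (E.toList.get i).card = r :=
    hu _ (Multiset.mem_toList.1 (List.get_mem _ _))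
  obtain ⟨s, rfl⟩ : ∃ s, k = s + 1 := ⟨k - 1, by omega⟩
  have hpath : HasEdgePath E.toList.get s :=
    hasEdgePath_of_card hr (by simp; omega) (by omega) (by simpa using hlt)
  obtain ⟨v, a, hv, ha, hva⟩ := hpath.exists_berge_path fun i => by rw [hr]; omega
  refine hf ⟨v, fun i => E.toList.get (a i), hv, ?_, hva⟩
  have hE : Multiset.map E.toList.get Finset.univ.val = E := by
    conv_rhs => rw [← Multiset.coe_toList E, ← List.ofFn_get E.toList]
    rw [Fin.univ_val_map]
  conv_rhs => rw [← hE]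
  rw [show List.ofFn (fun i => E.toList.get (a i)) = (List.ofFn a).map E.toList.get by
    rw [List.map_ofFn]; rfl, ← Multiset.map_coe]
  refine Multiset.map_le_map ((Multiset.le_iff_subset ?_).2 fun i _ => Finset.mem_univ i)
  exact Multiset.coe_nodup.2 (List.nodup_ofFn.2 ha)

end BergeM
end

section
/- For every integer r ≥ 3 there exists an integer N such that for all integers n ≥ N, ex^conn_r(n,BP_{r+1}) = n − r + 1. -/
namespace Berge

def IsBergePath {n : ℕ} (E : Finset (Finset (Fin n))) (k : ℕ)
    (v : Fin (k + 1) → Fin n) (f : Fin k → Finset (Fin n)) : Prop :=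
  Function.Injective v ∧ Function.Injective f ∧ (∀ i, f i ∈ E) ∧
    ∀ i : Fin k, v i.castSucc ∈ f i ∧ v i.succ ∈ f i

def HasBergePath {n : ℕ} (E : Finset (Finset (Fin n))) (k : ℕ) : Prop :=
  ∃ v f, IsBergePath E k v f

def BPFree {n : ℕ} (E : Finset (Finset (Fin n))) (k : ℕ) : Prop :=
  ¬ HasBergePath E k

def Connected {n : ℕ} (E : Finset (Finset (Fin n))) : Prop :=
  ∀ x y : Fin n, ∃ (k : ℕ) (v : Fin (k + 1) → Fin n) (f : Fin k → Finset (Fin n)),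
    IsBergePath E k v f ∧ (∃ i, v i = x) ∧ (∃ i, v i = y)

def Uniform {n : ℕ} (E : Finset (Finset (Fin n))) (r : ℕ) : Prop :=
  ∀ e ∈ E, e.card = r

noncomputable def exConn (n r k : ℕ) : ℕ :=
  sSup {m | ∃ E : Finset (Finset (Fin n)),
    Uniform E r ∧ Connected E ∧ BPFree E k ∧ E.card = m}

def IsBergeCycle {n : ℕ} (E : Finset (Finset (Fin n))) (k : ℕ)
    (v : Fin k → Fin n) (f : Fin k → Finset (Fin n)) : Prop :=
  Function.Injective v ∧ Function.Injective f ∧ (∀ i, f i ∈ E) ∧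
    ∀ i : Fin k, v i ∈ f i ∧ v ⟨(i.val + 1) % k, Nat.mod_lt _ i.pos⟩ ∈ f i

section Paths

variable {α : Type*} [DecidableEq α]

/-- `PathFrom E v k X F`: there is a Berge path of length `k` starting at `v` all of whose vertices
lie in `X` and all of whose hyperedges lie in `E ∩ F`. -/
inductive PathFrom (E : Finset (Finset α)) :
    α → ℕ → Finset α → Finset (Finset α) → Prop
  | nil {v : α} {X : Finset α} {F : Finset (Finset α)} (hv : v ∈ X) : PathFrom E v 0 X F
  | cons {v w : α} {k : ℕ} {X X' : Finset α} {F F' : Finset (Finset α)} {e : Finset α}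
      (h : PathFrom E v k X F) (hw : w ∉ X) (he : e ∈ E) (heF : e ∉ F) (hve : v ∈ e) (hwe : w ∈ e)
      (hX : insert w X ⊆ X') (hF : insert e F ⊆ F') : PathFrom E w (k + 1) X' F'

variable {E : Finset (Finset α)}

theorem PathFrom.cons_insert {v w : α} {k : ℕ} {X : Finset α} {F : Finset (Finset α)} {e : Finset α}
    (h : PathFrom E v k X F) (hw : w ∉ X) (he : e ∈ E) (heF : e ∉ F) (hve : v ∈ e) (hwe : w ∈ e) :
    PathFrom E w (k + 1) (insert w X) (insert e F) :=
  h.cons hw he heF hve hwe subset_rfl subset_rfl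

theorem PathFrom.mono {v : α} {k : ℕ} {X X' : Finset α} {F F' : Finset (Finset α)}
    (h : PathFrom E v k X F) (hX' : X ⊆ X') (hF' : F ⊆ F') : PathFrom E v k X' F' := by
  cases h with
  | nil hv => exact .nil (hX' hv)
  | cons h hw he heF hve hwe hX hF =>
    exact .cons h hw he heF hve hwe (hX.trans hX') (hF.trans hF')

theorem PathFrom.truncate {v : α} {k : ℕ} {X : Finset α} {F : Finset (Finset α)}
    (h : PathFrom E v k X F) {j : ℕ} (hj : j ≤ k) : PathFrom E v j X F := by
  induction h generalizing j with
  | nil hv => obtain rfl : j = 0 := by omega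
              exact .nil hv
  | cons h hw he heF hve hwe hX hF ih =>
    cases j with
    | zero => exact .nil (hX (Finset.mem_insert_self _ _))
    | succ j => exact .cons (ih (by omega)) hw he heF hve hwe hX hF

theorem PathFrom.exists_isBergePath {n : ℕ} {E : Finset (Finset (Fin n))} {v : Fin n} {k : ℕ}
    {X : Finset (Fin n)} {F : Finset (Finset (Fin n))} (h : PathFrom E v k X F) :
    ∃ vs fs, IsBergePath E k vs fs ∧ vs 0 = v ∧ (∀ i, vs i ∈ X) ∧ ∀ i, fs i ∈ F := by
  induction h with
  | @nil v X F hv =>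
    exact ⟨fun _ => v, Fin.elim0, ⟨fun i j _ => Fin.ext (by omega), fun i => i.elim0,
      fun i => i.elim0, fun i => i.elim0⟩, rfl, fun _ => hv, fun i => i.elim0⟩
  | @cons v w k X X' F F' e h hw he heF hve hwe hX hF ih =>
    obtain ⟨vs, fs, ⟨h1, h2, h3, h4⟩, h0, hvX, hfF⟩ := ih
    refine ⟨Fin.cons w vs, Fin.cons e fs, ⟨?_, ?_, ?_, ?_⟩, rfl, ?_, ?_⟩
    · rw [Fin.cons_injective_iff]
      refine ⟨?_, h1⟩
      rintro ⟨i, rfl⟩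
      exact hw (hvX i)
    · rw [Fin.cons_injective_iff]
      refine ⟨?_, h2⟩
      rintro ⟨i, rfl⟩
      exact heF (hfF i)
    · intro i
      refine Fin.cases ?_ (fun i => ?_) i
      · simpa using he
      · simpa using h3 i
    · intro i
      refine Fin.cases ?_ (fun i => ?_) i
      · simp [hwe, h0, hve]
      · have := h4 i
        rw [← Fin.succ_castSucc, Fin.cons_succ, Fin.cons_succ, Fin.cons_succ]
        exact this
    · intro i
      refine Fin.cases ?_ (fun i => ?_) i
      · exact hX (Finset.mem_insert_self _ _)
      · exact hX (Finset.mem_insert_of_mem (hvX i))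
    · intro i
      refine Fin.cases ?_ (fun i => ?_) i
      · exact hF (Finset.mem_insert_self _ _)
      · exact hF (Finset.mem_insert_of_mem (hfF i))

theorem BPFree.le_of_pathFrom {n r : ℕ} {E : Finset (Finset (Fin n))} (hE : BPFree E (r + 1))
    {v : Fin n} {k : ℕ} {X : Finset (Fin n)} {F : Finset (Finset (Fin n))}
    (h : PathFrom E v k X F) : k ≤ r := by
  by_contra hk
  obtain ⟨vs, fs, hp, -⟩ := (h.truncate (j := r + 1) (by omega)).exists_isBergePath
  exact hE ⟨vs, fs, hp⟩

/-- A Berge path starting in a set of vertices common to many unused hyperedges can be prolonged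
through all of that set. -/
theorem PathFrom.weave {G : Finset (Finset α)} {Y : Finset α} {s : α} {k : ℕ}
    {X : Finset α} {F : Finset (Finset α)} (h : PathFrom E s k X F)
    (hGE : G ⊆ E) (hG : ∀ e ∈ G, s ∈ e ∧ Y ⊆ e) (hGF : Disjoint G F) (hYX : Disjoint Y X)
    (hcard : Y.card ≤ G.card) :
    ∃ t ∈ insert s Y, PathFrom E t (k + Y.card) (X ∪ Y) (F ∪ G) := by
  induction Y using Finset.induction_on generalizing s k X F G with
  | empty => exact ⟨s, by simp, by simpa using h.mono subset_rfl Finset.subset_union_left⟩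
  | @insert y Y hy ih =>
    rw [Finset.card_insert_of_notMem hy] at hcard
    obtain ⟨e, he⟩ : G.Nonempty := Finset.card_pos.mp (by omega)
    rw [Finset.disjoint_insert_left] at hYX
    have hye : ∀ f ∈ G, y ∈ f ∧ Y ⊆ f := fun f hf =>
      ⟨(hG f hf).2 (Finset.mem_insert_self _ _), (Finset.subset_insert _ _).trans (hG f hf).2⟩
    have h1 := h.cons_insert hYX.1 (hGE he) (Finset.disjoint_left.mp hGF he)
      (hG e he).1 (hye e he).1
    obtain ⟨t, ht, hp⟩ := ih (G := G.erase e) h1 ((Finset.erase_subset _ _).trans hGE)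
      (fun f hf => hye f (Finset.mem_of_mem_erase hf))
      (by
        rw [Finset.disjoint_insert_right]
        exact ⟨by simp, hGF.mono_left (Finset.erase_subset _ _)⟩)
      (by rw [Finset.disjoint_insert_right]; exact ⟨hy, hYX.2⟩)
      (by rw [Finset.card_erase_of_mem he]; omega)
    refine ⟨t, Finset.mem_insert_of_mem ht, ?_⟩
    rw [Finset.card_insert_of_notMem hy, show k + (Y.card + 1) = k + 1 + Y.card by ring]
    refine hp.mono ?_ ?_
    · intro x; simp only [Finset.mem_union, Finset.mem_insert]; tauto
    · intro f; simp only [Finset.mem_union, Finset.mem_insert, Finset.mem_erase]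
      rintro ((rfl | h) | h)
      · exact Or.inr he
      · exact Or.inl h
      · exact Or.inr h.2

variable {φ : α → Finset α}

/-- A directed walk for `v ↦ φ v` gives a Berge path from its first vertex. -/
theorem pathFrom_of_isChain {a : α} {m : List α} {X : Finset α} {F : Finset (Finset α)}
    (hc : List.IsChain (fun x y => y ∈ φ x) (a :: m))
    (hnd : (a :: m).Nodup) (hφ : ∀ x ∈ a :: m, φ x ∈ E ∧ x ∈ φ x)
    (hinj : ∀ x ∈ a :: m, ∀ y ∈ a :: m, φ x = φ y → x = y)
    (hX : ∀ x ∈ a :: m, x ∈ X) (hF : ∀ x ∈ a :: m, x ≠ m.getLastD a → φ x ∈ F) :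
    PathFrom E a m.length X F := by
  induction m generalizing a X F with
  | nil => exact .nil (hX a (by simp))
  | cons b m ih =>
    rw [List.isChain_cons_cons] at hc
    rw [List.nodup_cons] at hnd
    have h1 := ih (X := (b :: m).toFinset) (F := F.erase (φ a)) hc.2 hnd.2
      (fun x hx => hφ x (List.mem_cons_of_mem _ hx))
      (fun x hx y hy => hinj x (List.mem_cons_of_mem _ hx) y (List.mem_cons_of_mem _ hy))
      (fun x hx => by simpa using hx)
      (fun x hx hne => Finset.mem_erase.mpr ⟨fun h => hnd.1 (by
          rwa [← hinj x (List.mem_cons_of_mem _ hx) a (by simp) h]),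
        hF x (List.mem_cons_of_mem _ hx) (by rwa [List.getLastD_cons])⟩)
    refine h1.cons (e := φ a) (by simpa using hnd.1) (hφ a (by simp)).1 (by simp) hc.1
      (hφ a (by simp)).2 ?_ ?_
    · intro x hx
      exact hX x (by simpa using hx)
    · have ha : φ a ∈ F := hF a (by simp) (by
        intro h
        apply hnd.1
        rw [List.getLastD_cons] at h
        rw [h]
        exact List.getLastD_mem_cons)
      intro f hf
      rw [Finset.mem_insert, Finset.mem_erase] at hf
      rcases hf with rfl | hf
      · exact ha
      · exact hf.2

/-- Prolong a Berge path backwards along a directed walk ending in an edge through its start. -/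
theorem PathFrom.prepend {a z : α} {m : List α} {k : ℕ} {X X' : Finset α}
    {F F' : Finset (Finset α)} (h : PathFrom E z k X F)
    (hc : List.IsChain (fun x y => y ∈ φ x) (a :: m)) (hz : z ∈ φ (m.getLastD a))
    (hnd : (a :: m).Nodup) (hφ : ∀ x ∈ a :: m, φ x ∈ E ∧ x ∈ φ x)
    (hinj : ∀ x ∈ a :: m, ∀ y ∈ a :: m, φ x = φ y → x = y)
    (hX : ∀ x ∈ a :: m, x ∉ X) (hF : ∀ x ∈ a :: m, φ x ∉ F)
    (hXX : X ⊆ X') (hX' : ∀ x ∈ a :: m, x ∈ X') (hFF : F ⊆ F') (hF' : ∀ x ∈ a :: m, φ x ∈ F') :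
    PathFrom E a (k + m.length + 1) X' F' := by
  induction m generalizing a X' F' with
  | nil =>
    simp only [List.mem_singleton, forall_eq] at *
    exact h.cons hX hφ.1 hF (by simpa using hz) hφ.2 (Finset.insert_subset hX' hXX)
      (Finset.insert_subset hF' hFF)
  | cons b m ih =>
    rw [List.isChain_cons_cons] at hc
    rw [List.nodup_cons] at hnd
    have h1 := ih (X' := X'.erase a) (F' := F'.erase (φ a)) hc.2 (by rwa [List.getLastD_cons] at hz)
      hnd.2
      (fun x hx => hφ x (List.mem_cons_of_mem _ hx))
      (fun x hx y hy => hinj x (List.mem_cons_of_mem _ hx) y (List.mem_cons_of_mem _ hy))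
      (fun x hx => hX x (List.mem_cons_of_mem _ hx))
      (fun x hx => hF x (List.mem_cons_of_mem _ hx))
      (fun x hx => Finset.mem_erase.mpr ⟨fun h => hX a (by simp) (h ▸ hx), hXX hx⟩)
      (fun x hx => Finset.mem_erase.mpr ⟨fun h => hnd.1 (h ▸ hx),
        hX' x (List.mem_cons_of_mem _ hx)⟩)
      (fun x hx => Finset.mem_erase.mpr ⟨fun h => hF a (by simp) (h ▸ hx), hFF hx⟩)
      (fun x hx => Finset.mem_erase.mpr ⟨fun h => hnd.1 (by
          rwa [← hinj x (List.mem_cons_of_mem _ hx) a (by simp) h]),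
        hF' x (List.mem_cons_of_mem _ hx)⟩)
    refine h1.cons (e := φ a) (by simp) (hφ a (by simp)).1 (by simp) hc.1 (hφ a (by simp)).2 ?_ ?_
    · rw [Finset.insert_erase (hX' a (by simp))]
    · rw [Finset.insert_erase (hF' a (by simp))]

/-- Prolong a Berge path by going forward along a directed walk from its start. -/
theorem PathFrom.append_walk {a : α} {m : List α} {k : ℕ} {X X' : Finset α}
    {F F' : Finset (Finset α)} (h : PathFrom E a k X F)
    (hc : List.IsChain (fun x y => y ∈ φ x) (a :: m))
    (hnd : (a :: m).Nodup) (hφ : ∀ x ∈ a :: m, φ x ∈ E ∧ x ∈ φ x)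
    (hinj : ∀ x ∈ a :: m, ∀ y ∈ a :: m, φ x = φ y → x = y)
    (hX : ∀ x ∈ m, x ∉ X) (hF : ∀ x ∈ a :: m, x ≠ m.getLastD a → φ x ∉ F)
    (hXX : X ⊆ X') (hX' : ∀ x ∈ m, x ∈ X') (hFF : F ⊆ F') (hF' : ∀ x ∈ a :: m, φ x ∈ F') :
    PathFrom E (m.getLastD a) (k + m.length) X' F' := by
  induction m generalizing a k X F with
  | nil => exact h.mono hXX hFF
  | cons b m ih =>
    rw [List.isChain_cons_cons] at hc
    rw [List.nodup_cons] at hnd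
    have hne : a ≠ (b :: m).getLastD a := by
      intro h
      apply hnd.1
      rw [List.getLastD_cons] at h
      rw [h]
      exact List.getLastD_mem_cons
    have h1 := h.cons_insert (hX b (by simp)) (hφ a (by simp)).1 (hF a (by simp) hne)
      (hφ a (by simp)).2 hc.1
    have h2 := ih h1 hc.2 hnd.2
      (fun x hx => hφ x (List.mem_cons_of_mem _ hx))
      (fun x hx y hy => hinj x (List.mem_cons_of_mem _ hx) y (List.mem_cons_of_mem _ hy))
      (fun x hx => by
        rw [Finset.mem_insert, not_or]
        refine ⟨?_, hX x (List.mem_cons_of_mem _ hx)⟩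
        rintro rfl
        exact (List.nodup_cons.mp hnd.2).1 hx)
      (fun x hx hne => by
        rw [Finset.mem_insert, not_or]
        refine ⟨fun h => hnd.1 ?_, hF x (List.mem_cons_of_mem _ hx) (by rwa [List.getLastD_cons])⟩
        rwa [← hinj x (List.mem_cons_of_mem _ hx) a (by simp) h])
      (Finset.insert_subset (hX' b (by simp)) hXX)
      (fun x hx => hX' x (List.mem_cons_of_mem _ hx))
      (Finset.insert_subset (hF' a (by simp)) hFF)
      (fun x hx => hF' x (List.mem_cons_of_mem _ hx))
    rw [List.getLastD_cons, List.length_cons, show k + (m.length + 1) = k + 1 + m.length by ring]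
    exact h2

end Paths

section Structure

variable {α : Type*} [DecidableEq α]

/-- Whenever some hyperedge misses the nonempty set `U`, a hyperedge missing `U` intersects a
hyperedge meeting `U`. This is the only consequence of connectedness that is needed. -/
def Linked (E : Finset (Finset α)) : Prop :=
  ∀ U : Finset α, U.Nonempty → (∃ g ∈ E, Disjoint g U) →
    ∃ g ∈ E, ∃ h ∈ E, Disjoint g U ∧ ¬ Disjoint h U ∧ ¬ Disjoint g h

theorem Connected.linked {n : ℕ} {E : Finset (Finset (Fin n))} (hE : Connected E)
    (hne : ∀ e ∈ E, e.Nonempty) : Linked E := by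
  rintro U ⟨u, hu⟩ ⟨g, hg, hgU⟩
  by_contra! hcon
  obtain ⟨z, hz⟩ := hne g hg
  obtain ⟨k, v, f, ⟨-, -, hfE, hvf⟩, ⟨i, hi⟩, ⟨j, hj⟩⟩ := hE u z
  let P : Fin n → Prop := fun x => x ∈ U ∨ ∃ h ∈ E, ¬ Disjoint h U ∧ x ∈ h
  have key : ∀ e ∈ E, ∀ x ∈ e, ∀ y ∈ e, P x → P y := by
    rintro e he x hx y hy (hxU | ⟨h, hh, hhU, hxh⟩)
    · exact Or.inr ⟨e, he, Finset.not_disjoint_iff.mpr ⟨x, hx, hxU⟩, hy⟩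
    · by_cases heU : Disjoint e U
      · exact absurd (hcon e he h hh heU hhU) (Finset.not_disjoint_iff.mpr ⟨x, hx, hxh⟩)
      · exact Or.inr ⟨e, he, heU, hy⟩
  have hall : ∀ i : Fin (k + 1), P (v i) ↔ P (v 0) := by
    intro i
    induction i using Fin.induction with
    | zero => rfl
    | succ i ih =>
      rw [← ih]
      exact ⟨key _ (hfE i) _ (hvf i).2 _ (hvf i).1, key _ (hfE i) _ (hvf i).1 _ (hvf i).2⟩
  have hPz : P z := by
    rw [← hj, hall, ← hall i, hi]
    exact Or.inl hu
  rcases hPz with hzU | ⟨h, hh, hhU, hzh⟩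
  · exact Finset.disjoint_left.mp hgU hz hzU
  · exact Finset.not_disjoint_iff.mpr ⟨z, hz, hzh⟩ (hcon g hg h hh hgU hhU)

variable {E : Finset (Finset α)} {r : ℕ}

theorem eq_insert_of_subset {S e : Finset α} (hS : S.card + 1 = e.card) (hSe : S ⊆ e) {x : α}
    (hx : x ∈ e) (hxS : x ∉ S) : e = insert x S := by
  refine (Finset.eq_of_subset_of_card_le (Finset.insert_subset hx hSe) ?_).symm
  rw [Finset.card_insert_of_notMem hxS, hS]

theorem rich_no_path (hunif : ∀ e ∈ E, e.card = r)
    (hpath : ∀ v k X F, PathFrom E v k X F → k ≤ r)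
    {S : Finset α} (hS : S.card + 1 = r) (hrich : r + 4 ≤ (E.filter (S ⊆ ·)).card)
    {f g : Finset α} (hf : f ∈ E) (hg : g ∈ E) (hfg : f ≠ g) {x y u : α} (hxf : x ∈ f)
    (hxg : x ∈ g) (hxS : x ∉ S) (huf : u ∈ f) (huS : u ∈ S) (hyg : y ∈ g) (hyS : y ∉ S)
    (hyx : y ≠ x) : False := by
  set T : Finset (Finset α) := {f, g, insert x S, insert y S} with hT
  set G := E.filter (S ⊆ ·) \ T with hG
  have hTc : T.card ≤ 4 := Finset.card_le_four
  have hGc : r ≤ G.card := by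
    have : _ ≤ G.card := Finset.le_card_sdiff T (E.filter (S ⊆ ·))
    omega
  have hGm : ∀ e ∈ G, e ∈ E ∧ S ⊆ e ∧ e ≠ f ∧ e ≠ g ∧ x ∉ e ∧ y ∉ e := by
    intro e he
    simp only [hG, hT, Finset.mem_sdiff, Finset.mem_filter, Finset.mem_insert,
      Finset.mem_singleton, not_or] at he
    obtain ⟨⟨heE, hSe⟩, h1, h2, h3, h4⟩ := he
    have hc : S.card + 1 = e.card := by rw [hS, hunif e heE]
    exact ⟨heE, hSe, h1, h2, fun hx => h3 (eq_insert_of_subset hc hSe hx hxS),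
      fun hy => h4 (eq_insert_of_subset hc hSe hy hyS)⟩
  have hScard : 0 < S.card := Finset.card_pos.mpr ⟨u, huS⟩
  obtain ⟨e, he⟩ : G.Nonempty := Finset.card_pos.mp (by omega)
  obtain ⟨heE, hSe, hef, heg, hxe, hye⟩ := hGm e he
  obtain ⟨w, hwe, hwS⟩ := Finset.exists_mem_notMem_of_card_lt_card
    (show S.card < e.card by rw [hunif e heE]; omega)
  have h0 : PathFrom E y 0 {y} ∅ := .nil (by simp)
  have h1 := h0.cons_insert (w := x) (by simpa using hyx.symm) hg (by simp) hyg hxg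
  have h2 := h1.cons_insert (w := u) (e := f)
    (by
      simp only [Finset.mem_insert, Finset.mem_singleton, not_or]
      exact ⟨fun h => hxS (h ▸ huS), fun h => hyS (h ▸ huS)⟩)
    hf (by simpa using hfg) hxf huf
  obtain ⟨t, ht, h3⟩ := h2.weave (G := G.erase e) (Y := S.erase u)
    (fun d hd => (hGm d (Finset.mem_of_mem_erase hd)).1)
    (fun d hd => ⟨(hGm d (Finset.mem_of_mem_erase hd)).2.1 huS,
      (Finset.erase_subset _ _).trans (hGm d (Finset.mem_of_mem_erase hd)).2.1⟩)
    (by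
      rw [Finset.disjoint_left]
      intro d hd hd'
      have := hGm d (Finset.mem_of_mem_erase hd)
      simp only [Finset.mem_insert, Finset.notMem_empty, or_false] at hd'
      tauto)
    (by
      rw [Finset.disjoint_left]
      intro d hd hd'
      simp only [Finset.mem_insert, Finset.mem_singleton, Finset.mem_erase] at hd hd'
      rcases hd' with h | rfl | rfl
      · exact hd.1 h
      · exact hxS hd.2
      · exact hyS hd.2)
    (by rw [Finset.card_erase_of_mem huS, Finset.card_erase_of_mem he]; omega)
  rw [Finset.insert_erase huS] at ht
  have h4 := h3.cons_insert (w := w) (e := e)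
    (by
      simp only [Finset.mem_union, Finset.mem_insert, Finset.mem_singleton, Finset.mem_erase]
      rintro ((rfl | rfl | rfl) | h)
      · exact hwS huS
      · exact hxe hwe
      · exact hye hwe
      · exact hwS h.2)
    heE
    (by
      simp only [Finset.mem_union, Finset.mem_insert, Finset.mem_erase, Finset.notMem_empty]
      tauto)
    (hSe ht) hwe
  have := hpath _ _ _ _ h4
  rw [Finset.card_erase_of_mem huS] at this
  omega

/-- If some `(r-1)`-set lies in many hyperedges, the hyperedges are disjoint outside of it. -/
theorem card_add_le_of_rich [Fintype α] (hr : 2 ≤ r) (hunif : ∀ e ∈ E, e.card = r)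
    (hlink : Linked E) (hpath : ∀ v k X F, PathFrom E v k X F → k ≤ r)
    {S : Finset α} (hS : S.card + 1 = r) (hrich : r + 4 ≤ (E.filter (S ⊆ ·)).card) :
    E.card + r ≤ Fintype.card α + 1 := by
  have hmeet : ∀ f ∈ E, ∀ g ∈ E, f ≠ g → ∀ x ∈ f, x ∈ g → x ∉ S → ¬ Disjoint f S → False := by
    intro f hf g hg hfg x hxf hxg hxS hfS
    obtain ⟨u, huf, huS⟩ := Finset.not_disjoint_iff.mp hfS
    have key : ∀ e ∈ E, x ∈ e → (∀ y ∈ e, y ∉ S → y = x) → e = insert x S := by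
      intro e he hxe h
      refine Finset.eq_of_subset_of_card_le (fun y hy => ?_) ?_
      · rw [Finset.mem_insert]
        by_contra! hy'
        exact hy'.1 (h y hy hy'.2)
      · rw [Finset.card_insert_of_notMem hxS, hS, hunif e he]
    by_cases h : ∀ y ∈ g, y ∉ S → y = x
    · have hg' := key g hg hxg h
      have hf' : ¬ ∀ y ∈ f, y ∉ S → y = x := fun h' => hfg ((key f hf hxf h').trans hg'.symm)
      push Not at hf'
      obtain ⟨y, hyf, hyS, hyx⟩ := hf'
      exact rich_no_path hunif hpath hS hrich hg hf hfg.symm hxg hxf hxS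
        (by rw [hg']; exact Finset.mem_insert_of_mem huS) huS hyf hyS hyx
    · push Not at h
      obtain ⟨y, hyg, hyS, hyx⟩ := h
      exact rich_no_path hunif hpath hS hrich hf hg hfg hxf hxg hxS huf huS hyg hyS hyx
  have hall : ∀ f ∈ E, ¬ Disjoint f S := by
    intro f hf hfS
    obtain ⟨g, hg, h, hh, hgS, hhS, hgh⟩ :=
      hlink S (Finset.card_pos.mp (by omega)) ⟨f, hf, hfS⟩
    obtain ⟨x, hxg, hxh⟩ := Finset.not_disjoint_iff.mp hgh
    exact hmeet h hh g hg (fun e => hhS (e ▸ hgS)) x hxh hxg (Finset.disjoint_left.mp hgS hxg) hhS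
  have hz : ∀ f : Finset α, ∃ z : α, f ∈ E → z ∈ f ∧ z ∉ S := by
    intro f
    have : Nonempty α := by
      obtain ⟨z, -⟩ := Finset.card_pos.mp (show 0 < S.card by omega)
      exact ⟨z⟩
    by_cases hf : f ∈ E
    · obtain ⟨w, hw⟩ := Finset.exists_mem_notMem_of_card_lt_card
        (show S.card < f.card by rw [hunif f hf]; omega)
      exact ⟨w, fun _ => hw⟩
    · exact ⟨Classical.arbitrary α, fun h => absurd h hf⟩
  choose z hz using hz
  have hle : E.card ≤ Sᶜ.card := by
    refine Finset.card_le_card_of_injOn z (fun f hf => ?_) (fun f hf g hg hfg => ?_)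
    · simpa using (hz f hf).2
    · by_contra hne
      exact hmeet f hf g hg hne (z f) (hz f hf).1 (hfg ▸ (hz g hg).1) (hz f hf).2 (hall f hf)
  rw [Finset.card_compl] at hle
  have := Finset.card_le_univ S
  omega

variable {φ : α → Finset α}

theorem exists_pathFrom_around {a : α} {m : List α}
    (hc : List.IsChain (fun x y => y ∈ φ x) (a :: (m ++ [a])))
    (hnd : (a :: m).Nodup) (hφ : ∀ x ∈ a :: m, φ x ∈ E ∧ x ∈ φ x)
    (hinj : ∀ x ∈ a :: m, ∀ y ∈ a :: m, φ x = φ y → x = y)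
    {f : Finset α} (hf : ¬ Disjoint f (a :: m).toFinset) :
    ∃ u ∈ f, PathFrom E u m.length (a :: m).toFinset
      (((a :: m).toFinset.image φ).erase f) := by
  have rot : ∀ u ∈ a :: m, ∃ m', List.IsChain (fun x y => y ∈ φ x) (u :: (m' ++ [u])) ∧
      (u :: m').Perm (a :: m) := by
    intro u hu
    obtain ⟨s, t, hst⟩ := List.append_of_mem hu
    refine ⟨t ++ s, ?_, ?_⟩
    · rw [← Cycle.chain_coe_cons] at hc ⊢
      rw [hst] at hc
      have : ((s ++ u :: t : List α) : Cycle α) = ((u :: (t ++ s) : List α) : Cycle α) :=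
        Cycle.coe_eq_coe.mpr List.isRotated_append
      rwa [this] at hc
    · rw [hst]
      exact List.perm_append_comm (l₁ := u :: t)
  have main : ∀ u m', List.IsChain (fun x y => y ∈ φ x) (u :: (m' ++ [u])) →
      (u :: m').Perm (a :: m) → (∀ x ∈ u :: m', x ≠ m'.getLastD u → φ x ≠ f) →
      PathFrom E u m.length (a :: m).toFinset (((a :: m).toFinset.image φ).erase f) := by
    intro u m' hc' hp hne
    have hlen : m'.length = m.length := by simpa using hp.length_eq
    rw [← hlen]
    rw [← List.cons_append] at hc'
    refine pathFrom_of_isChain hc'.left_of_append (hp.nodup_iff.mpr hnd)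
      (fun x hx => hφ x (hp.mem_iff.mp hx))
      (fun x hx y hy => hinj x (hp.mem_iff.mp hx) y (hp.mem_iff.mp hy))
      (fun x hx => by rw [List.mem_toFinset]; exact hp.mem_iff.mp hx)
      (fun x hx hx' => Finset.mem_erase.mpr ⟨hne x hx hx', Finset.mem_image_of_mem _ ?_⟩)
    rw [List.mem_toFinset]; exact hp.mem_iff.mp hx
  by_cases hfC : ∃ q ∈ a :: m, φ q = f
  · obtain ⟨q, hq, rfl⟩ := hfC
    obtain ⟨m', hc', hp⟩ := rot q hq
    -- rotate once more, so that the walk ends in `q`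
    cases m' with
    | nil =>
      refine ⟨q, (hφ q hq).2, main q [] hc' hp ?_⟩
      simp
    | cons b m' =>
      have hb : b ∈ φ q := by
        rw [List.cons_append, List.isChain_cons_cons] at hc'
        exact hc'.1
      refine ⟨b, hb, main b (m' ++ [q]) ?_ (((List.perm_append_comm (l₁ := b :: m')
        (l₂ := [q]))).trans hp) ?_⟩
      · rw [← Cycle.chain_coe_cons] at hc' ⊢
        have : ((q :: b :: m' : List α) : Cycle α) = ((b :: (m' ++ [q]) : List α) : Cycle α) :=
          Cycle.coe_eq_coe.mpr (List.isRotated_append (l := [q]) (l' := b :: m'))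
        rwa [this] at hc'
      · intro x hx hne h
        rw [List.getLastD_concat] at hne
        refine hne (hinj x ?_ q hq h)
        refine hp.mem_iff.mp ?_
        simp only [List.mem_cons, List.mem_append, List.not_mem_nil, or_false] at hx ⊢
        tauto
  · push Not at hfC
    obtain ⟨u, huf, hu⟩ := Finset.not_disjoint_iff.mp hf
    rw [List.mem_toFinset] at hu
    obtain ⟨m', hc', hp⟩ := rot u hu
    exact ⟨u, huf, main u m' hc' hp fun x hx _ => hfC x (hp.mem_iff.mp hx)⟩

/-- A long Berge cycle bounds the number of hyperedges when `(r-1)`-sets have bounded codegree. -/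
theorem two_mul_card_le_of_long_cycle [Fintype α] (hr : 2 ≤ r) (hunif : ∀ e ∈ E, e.card = r)
    (hlink : Linked E) (hpath : ∀ v k X F, PathFrom E v k X F → k ≤ r) {R : ℕ}
    (hpoor : ∀ S : Finset α, S.card + 1 = r → (E.filter (S ⊆ ·)).card ≤ R)
    {a : α} {m : List α} (hc : List.IsChain (fun x y => y ∈ φ x) (a :: (m ++ [a])))
    (hnd : (a :: m).Nodup) (hφ : ∀ x ∈ a :: m, φ x ∈ E ∧ x ∈ φ x)
    (hinj : ∀ x ∈ a :: m, ∀ y ∈ a :: m, φ x = φ y → x = y) (hlen : r ≤ m.length + 1) :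
    2 * E.card ≤ Fintype.card α + 2 * (r + 1 + R * 2 ^ (r + 1)) := by
  set U := (a :: m).toFinset with hU
  set C := U.image φ with hC
  have hUcard : U.card ≤ r + 1 := by
    have h : U.card ≤ _ := List.toFinset_card_le (a :: m)
    rw [List.length_cons] at h
    rw [← List.cons_append] at hc
    have := hpath _ _ _ _ (pathFrom_of_isChain (X := U) (F := C) hc.left_of_append hnd hφ hinj
      (fun x hx => by simpa [hU] using hx)
      (fun x hx _ => Finset.mem_image_of_mem _ (by simpa [hU] using hx)))
    omega
  have hCU : ∀ f ∈ C, ¬ Disjoint f U := by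
    intro f hf
    obtain ⟨x, hx, rfl⟩ := Finset.mem_image.mp hf
    exact Finset.not_disjoint_iff.mpr ⟨x, (hφ x (by simpa [hU] using hx)).2, hx⟩
  have key : ∀ f ∈ E, ∀ g ∈ E, g ∉ C → f ≠ g → ¬ Disjoint f U → ∀ x ∈ f, x ∈ g → x ∉ U →
      ∀ y ∈ g, y ∉ U → y = x := by
    intro f hf g hg hgC hfg hfU x hxf hxg hxU y hyg hyU
    by_contra hyx
    obtain ⟨u, huf, h0⟩ := exists_pathFrom_around hc hnd hφ hinj hfU
    have h1 := h0.cons_insert hxU hf (by simp) huf hxf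
    have h2 := h1.cons_insert (w := y) (e := g)
      (by rw [Finset.mem_insert]; tauto) hg
      (by rw [Finset.mem_insert, Finset.mem_erase]; tauto) hxg hyg
    have := hpath _ _ _ _ h2
    omega
  have hall : ∀ f ∈ E, ¬ Disjoint f U := by
    intro f hf hfU
    obtain ⟨g, hg, h, hh, hgU, hhU, hgh⟩ := hlink U ⟨a, by simp [hU]⟩ ⟨f, hf, hfU⟩
    obtain ⟨x, hxg, hxh⟩ := Finset.not_disjoint_iff.mp hgh
    obtain ⟨y, hyg, hyx⟩ := Finset.exists_mem_ne (show 1 < g.card by rw [hunif g hg]; omega) x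
    exact hyx (key h hh g hg (fun hgC => hCU g hgC hgU) (fun e => hhU (e ▸ hgU)) hhU x hxh hxg
      (Finset.disjoint_left.mp hgU hxg) y hyg (Finset.disjoint_left.mp hgU hyg))
  set E₀ := E.filter (fun f => (f \ U).card ≤ 1) with hE₀
  set E₁ := (E \ C) \ E₀ with hE₁
  have hE₁m : ∀ f ∈ E₁, f ∈ E ∧ f ∉ C ∧ 2 ≤ (f \ U).card := by
    intro f hf
    simp only [hE₁, hE₀, Finset.mem_sdiff, Finset.mem_filter, not_and, not_le] at hf
    exact ⟨hf.1.1, hf.1.2, hf.2 hf.1.1⟩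
  have h1 : 2 * E₁.card ≤ Fintype.card α := by
    have hdisj : (E₁ : Set (Finset α)).PairwiseDisjoint (fun f => f \ U) := by
      intro f hf g hg hfg
      rw [Function.onFun, Finset.disjoint_left]
      intro x hxf hxg
      rw [Finset.mem_sdiff] at hxf hxg
      obtain ⟨hfE, hfC, -⟩ := hE₁m f hf
      obtain ⟨hgE, hgC, hg2⟩ := hE₁m g hg
      obtain ⟨y, hy, hyx⟩ := Finset.exists_mem_ne (show 1 < (g \ U).card by omega) x
      rw [Finset.mem_sdiff] at hy
      exact hyx (key f hfE g hgE hgC hfg (hall f hfE) x hxf.1 hxg.1 hxf.2 y hy.1 hy.2)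
    have hs := Finset.card_biUnion hdisj
    have hs' := Finset.card_nsmul_le_sum E₁ (fun f => (f \ U).card) 2 fun f hf => (hE₁m f hf).2.2
    have := Finset.card_le_univ (E₁.biUnion fun f => f \ U)
    simp only [smul_eq_mul] at hs'
    omega
  have h0 : E₀.card ≤ R * 2 ^ (r + 1) := by
    have := Finset.card_le_mul_card_image_of_maps_to (s := E₀) (t := U.powerset)
      (f := fun f => f ∩ U) (fun f _ => Finset.mem_powerset.mpr Finset.inter_subset_right) R ?_
    · rw [Finset.card_powerset] at this
      exact this.trans (Nat.mul_le_mul_left _ (Nat.pow_le_pow_right (by omega) hUcard))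
    · intro A _
      rcases Finset.eq_empty_or_nonempty (E₀.filter fun f => f ∩ U = A) with he | ⟨f, hf⟩
      · rw [he]; simp
      · rw [Finset.mem_filter, hE₀, Finset.mem_filter] at hf
        obtain ⟨⟨hfE, hf1⟩, rfl⟩ := hf
        have := Finset.card_sdiff_add_card_inter f U
        have := hunif f hfE
        obtain ⟨S, hSA, hS⟩ := Finset.exists_subset_card_eq
          (show r - 1 ≤ (f ∩ U).card by omega)
        refine (Finset.card_le_card ?_).trans (hpoor S (by omega))
        intro g hg
        rw [Finset.mem_filter, hE₀, Finset.mem_filter] at hg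
        rw [Finset.mem_filter]
        exact ⟨hg.1.1, hSA.trans (hg.2 ▸ Finset.inter_subset_left)⟩
  have hCc : C.card ≤ r + 1 := Finset.card_image_le.trans hUcard
  have hle : E.card ≤ E₁.card + E₀.card + C.card := by
    have := Finset.le_card_sdiff C E
    have : _ ≤ E₁.card := Finset.le_card_sdiff E₀ (E \ C)
    omega
  omega

end Structure

section Matching

variable {α : Type*} [DecidableEq α]

/-- Deficiency version of Hall's theorem for assigning to vertices hyperedges containing them. -/
theorem exists_partial_matching (E : Finset (Finset α)) (A : Finset α) (d : ℕ)
    (h : ∀ s ⊆ A, s.card ≤ (E.filter fun e => ¬ Disjoint e s).card + d) :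
    ∃ (φ : α → Finset α) (D : Finset α), D.card ≤ d ∧
      (∀ v ∈ A, v ∉ D → φ v ∈ E ∧ v ∈ φ v) ∧
      ∀ u ∈ A, u ∉ D → ∀ v ∈ A, v ∉ D → φ u = φ v → u = v := by
  let t : A → Finset (Finset α ⊕ Fin d) := fun v =>
    (E.filter (v.1 ∈ ·)).disjSum Finset.univ
  have hall : ∀ s : Finset A, s.card ≤ (s.biUnion t).card := by
    intro s
    rcases s.eq_empty_or_nonempty with rfl | ⟨v, hv⟩
    · simp
    · have h1 := h (s.image Subtype.val) (by
        intro x hx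
        obtain ⟨y, -, rfl⟩ := Finset.mem_image.mp hx
        exact y.2)
      rw [Finset.card_image_of_injective _ Subtype.val_injective] at h1
      refine h1.trans ?_
      have h2 (A : Finset (Finset α)) :
          A.card + d = (A.disjSum (Finset.univ : Finset (Fin d))).card := by
        simp [Finset.card_disjSum]
      rw [h2]
      refine Finset.card_le_card ?_
      intro x hx
      rw [Finset.mem_biUnion]
      rw [Finset.mem_disjSum] at hx
      rcases hx with ⟨e, he, rfl⟩ | ⟨i, -, rfl⟩
      · rw [Finset.mem_filter] at he
        obtain ⟨y, hye, hys⟩ := Finset.not_disjoint_iff.mp he.2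
        obtain ⟨z, hz, rfl⟩ := Finset.mem_image.mp hys
        exact ⟨z, hz, by simp [t, he.1, hye]⟩
      · exact ⟨v, hv, by simp [t]⟩
  obtain ⟨f, hf, hft⟩ := (Finset.all_card_le_biUnion_card_iff_exists_injective t).mp hall
  refine ⟨fun v => if hv : v ∈ A then (f ⟨v, hv⟩).elim id fun _ => ∅ else ∅,
    (A.attach.filter fun v => (f v).isRight).image Subtype.val, ?_, ?_, ?_⟩
  · rw [Finset.card_image_of_injective _ Subtype.val_injective]
    have hle := Finset.card_le_card_of_injOn (s := A.attach.filter fun v => (f v).isRight)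
      (t := (∅ : Finset (Finset α)).disjSum (Finset.univ : Finset (Fin d))) f ?_ hf.injOn
    · simpa [Finset.card_disjSum] using hle
    · intro v hv
      rw [Finset.mem_coe, Finset.mem_filter] at hv
      obtain ⟨i, hi⟩ := Sum.isRight_iff.mp hv.2
      simp [hi]
  · intro v hv hvD
    rcases hfv : f ⟨v, hv⟩ with e | i
    · have := hft ⟨v, hv⟩
      rw [hfv] at this
      simpa [t, hv, hfv] using this
    · exact (hvD (Finset.mem_image.mpr ⟨⟨v, hv⟩, by simp [hfv], rfl⟩)).elim
  · intro u hu huD v hv hvD huv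
    rcases hfu : f ⟨u, hu⟩ with e | i
    · rcases hfv : f ⟨v, hv⟩ with e' | i
      · simp only [hu, hv, dif_pos, hfu, hfv, Sum.elim_inl, id] at huv
        have := hf (hfu.trans ((congrArg Sum.inl huv).trans hfv.symm))
        exact congrArg Subtype.val this
      · exact (hvD (Finset.mem_image.mpr ⟨⟨v, hv⟩, by simp [hfv], rfl⟩)).elim
    · exact (huD (Finset.mem_image.mpr ⟨⟨u, hu⟩, by simp [hfu], rfl⟩)).elim

variable {φ : α → Finset α}

/-- `Z` is the vertex set of a directed cycle of `v ↦ φ v` avoiding `B`, and the out-neighbours of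
its vertex `q` lie in `Z ∪ B`. -/
def Terminal (φ : α → Finset α) (B : Finset α) (q : α) (Z : Finset α) : Prop :=
  ∃ a m, m.getLastD a = q ∧ (a :: m).toFinset = Z ∧ (a :: m).Nodup ∧
    List.IsChain (fun x y => y ∈ φ x) (a :: m) ∧ a ∈ φ q ∧ Disjoint Z B ∧ φ q \ B ⊆ Z

theorem Terminal.mem {B : Finset α} {q : α} {Z : Finset α} (h : Terminal φ B q Z) : q ∈ Z := by
  obtain ⟨a, m, rfl, rfl, -⟩ := h
  rw [List.mem_toFinset]
  exact List.getLastD_mem_cons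

theorem Terminal.disjoint {B : Finset α} {q : α} {Z : Finset α} (h : Terminal φ B q Z) :
    Disjoint Z B := by
  obtain ⟨a, m, -, -, -, -, -, h, -⟩ := h
  exact h

theorem exists_terminal [Fintype α] {B : Finset α} (hφ : ∀ v ∉ B, v ∈ φ v) {v : α} (hv : v ∉ B) :
    ∃ q Z, Terminal φ B q Z := by
  let Walk : List α → α → Prop := fun l q =>
    (l ++ [q]).Nodup ∧ List.IsChain (fun x y => y ∈ φ x) (l ++ [q]) ∧ ∀ x ∈ l ++ [q], x ∉ B
  obtain ⟨l, q, ⟨hnd, hc, hB⟩, hmax⟩ : ∃ l q, Walk l q ∧ ∀ x ∈ φ q, x ∉ B → x ∈ l ++ [q] := by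
    by_contra! hcon
    have hlong : ∀ k, ∃ l q, Walk l q ∧ l.length = k := by
      intro k
      induction k with
      | zero => exact ⟨[], v, ⟨by simp, by simp, by simpa using hv⟩, rfl⟩
      | succ k ih =>
        obtain ⟨l, q, hW, rfl⟩ := ih
        obtain ⟨x, hxq, hxB, hxl⟩ := hcon l q hW
        refine ⟨l ++ [q], x, ⟨?_, ?_, ?_⟩, by simp⟩
        · rw [← List.concat_eq_append, List.nodup_concat]
          exact ⟨hxl, hW.1⟩
        · rw [List.isChain_append]
          exact ⟨hW.2.1, by simp, by simpa using hxq⟩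
        · intro y hy
          rw [List.mem_append, List.mem_singleton] at hy
          rcases hy with hy | rfl
          · exact hW.2.2 y hy
          · exact hxB
    obtain ⟨l, q, hW, hl⟩ := hlong (Fintype.card α)
    have := hW.1.length_le_card
    rw [List.length_append, hl] at this
    simp at this
  have hq : q ∈ φ q := hφ q (hB q (by simp))
  obtain ⟨a, ha⟩ := Option.isSome_iff_exists.mp
    (List.find?_isSome.mpr ⟨q, by simp, by simpa using hq⟩ :
      ((l ++ [q]).find? (fun x => decide (x ∈ φ q))).isSome)
  obtain ⟨haq, s, m, hsm, hs⟩ := List.find?_eq_some_iff_append.mp ha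
  simp only [decide_eq_true_eq, Bool.not_eq_true', decide_eq_false_iff_not] at haq hs
  rw [hsm] at hnd hc hB hmax
  refine ⟨q, _, a, m, ?_, rfl, (List.nodup_append.mp hnd).2.1, hc.right_of_append, haq, ?_, ?_⟩
  · have := congrArg (fun l => List.getLastD l q) hsm
    rw [List.getLastD_eq_getLast?, List.getLastD_eq_getLast?, List.getLast?_append,
      List.getLast?_append, List.getLast?_singleton, List.getLast?_cons] at this
    rw [List.getLastD_eq_getLast?]
    simpa using this.symm
  · rw [Finset.disjoint_left]
    intro x hx
    exact hB x (List.mem_append_right _ (List.mem_toFinset.mp hx))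
  · intro x hx
    rw [Finset.mem_sdiff] at hx
    rw [List.mem_toFinset]
    exact (List.mem_append.mp (hmax x hx.1 hx.2)).resolve_left fun h => hs x h hx.1

variable {E : Finset (Finset α)} {r : ℕ}

/-- Every Berge cycle represented by a directed cycle has length less than `r`. -/
def NoLongCycle (E : Finset (Finset α)) (r : ℕ) : Prop :=
  ∀ (φ : α → Finset α) (a : α) (m : List α),
    List.IsChain (fun x y => y ∈ φ x) (a :: (m ++ [a])) → (a :: m).Nodup →
    (∀ x ∈ a :: m, φ x ∈ E ∧ x ∈ φ x) →
    (∀ x ∈ a :: m, ∀ y ∈ a :: m, φ x = φ y → x = y) → m.length + 1 < r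

theorem Terminal.inter_nonempty (hE : NoLongCycle E r) (hunif : ∀ e ∈ E, e.card = r)
    {B : Finset α} (hφ : ∀ v ∉ B, φ v ∈ E ∧ v ∈ φ v)
    (hinj : ∀ u ∉ B, ∀ v ∉ B, φ u = φ v → u = v) {q : α} {Z : Finset α}
    (h : Terminal φ B q Z) : (φ q ∩ B).Nonempty := by
  have hqB : q ∉ B := Finset.disjoint_left.mp h.disjoint h.mem
  obtain ⟨a, m, rfl, rfl, hnd, hc, ha, hZB, hsub⟩ := h
  have hB : ∀ x ∈ a :: m, x ∉ B := fun x hx =>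
    Finset.disjoint_left.mp hZB (List.mem_toFinset.mpr hx)
  by_contra hne
  rw [Finset.not_nonempty_iff_eq_empty, ← Finset.disjoint_iff_inter_eq_empty] at hne
  rw [Finset.sdiff_eq_self_of_disjoint hne] at hsub
  have h1 := (Finset.card_le_card hsub).trans (List.toFinset_card_le _)
  rw [hunif _ (hφ _ hqB).1, List.length_cons] at h1
  have h2 := hE φ a m (by
    rw [← List.cons_append, List.isChain_append]
    refine ⟨hc, by simp, ?_⟩
    intro x hx y hy
    have hx' : m.getLastD a = x := by
      rw [← List.getLastD_cons (a := a), List.getLastD_eq_getLast?, Option.mem_def.mp hx]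
      rfl
    obtain rfl : a = y := by simpa using hy
    rwa [hx'] at ha) hnd (fun x hx => hφ x (hB x hx))
    (fun x hx y hy => hinj x (hB x hx) y (hB y hy))
  omega

theorem card_filter_subset_le (hE : NoLongCycle E r) (hr : 1 ≤ r) (hunif : ∀ e ∈ E, e.card = r)
    [Fintype α] (U : Finset α) : (E.filter (· ⊆ U)).card ≤ U.card := by
  induction U using Finset.strongInduction with
  | H U ih =>
    by_contra! hU
    have hmatch : ∀ s ⊆ U, s.card ≤
        ((E.filter (· ⊆ U)).filter fun e => ¬ Disjoint e s).card + 0 := by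
      intro s hs
      rcases s.eq_empty_or_nonempty with rfl | hne
      · simp
      · have h1 := ih (U \ s) (Finset.sdiff_ssubset hs hne)
        have h2 := Finset.card_sdiff_add_card_eq_card hs
        have h3 := Finset.card_filter_add_card_filter_not (s := E.filter (· ⊆ U))
          (fun e => ¬ Disjoint e s)
        have h4 : ((E.filter (· ⊆ U)).filter fun e => ¬ ¬ Disjoint e s) = E.filter (· ⊆ U \ s) := by
          ext e
          simp only [Finset.mem_filter, Finset.subset_sdiff]
          tauto
        rw [h4] at h3
        omega
    obtain ⟨φ, D, hD, hφ, hinj⟩ := exists_partial_matching _ U 0 hmatch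
    obtain rfl : D = ∅ := by simpa using hD
    have hUne : U.Nonempty := by
      by_contra hne
      rw [Finset.not_nonempty_iff_eq_empty] at hne
      obtain ⟨e, he⟩ := Finset.card_pos.mp (show 0 < (E.filter (· ⊆ U)).card by omega)
      rw [Finset.mem_filter, hne, Finset.subset_empty] at he
      have := hunif e he.1
      rw [he.2, Finset.card_empty] at this
      omega
    obtain ⟨v, hv⟩ := hUne
    have hφ' : ∀ v ∉ Uᶜ, φ v ∈ E ∧ v ∈ φ v ∧ φ v ⊆ U := by
      intro v hv
      have := hφ v (by simpa using hv) (by simp)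
      rw [Finset.mem_filter] at this
      tauto
    obtain ⟨q, Z, hT⟩ := exists_terminal (B := Uᶜ) (fun v hv => (hφ' v hv).2.1)
      (show v ∉ Uᶜ by simpa using hv)
    have hq : q ∉ Uᶜ := Finset.disjoint_left.mp hT.disjoint hT.mem
    obtain ⟨x, hx⟩ := hT.inter_nonempty hE hunif
      (fun v hv => ⟨(hφ' v hv).1, (hφ' v hv).2.1⟩)
      (fun u hu v hv => hinj u (by simpa using hu) (by simp) v (by simpa using hv) (by simp))
    rw [Finset.mem_inter, Finset.mem_compl] at hx
    exact hx.2 ((hφ' q hq).2.2 hx.1)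

theorem no_many_terminals (hr : 2 ≤ r) (hunif : ∀ e ∈ E, e.card = r)
    (hpath : ∀ v k X F, PathFrom E v k X F → k ≤ r)
    {B : Finset α} (hφ : ∀ v ∉ B, φ v ∈ E ∧ v ∈ φ v)
    (hinj : ∀ u ∉ B, ∀ v ∉ B, φ u = φ v → u = v)
    {T : Finset (α × Finset α)} (hT : ∀ p ∈ T, Terminal φ B p.1 p.2)
    (hdisj : ∀ p ∈ T, ∀ p' ∈ T, p ≠ p' → Disjoint p.2 p'.2) {Y : Finset α} (hY0 : Y.Nonempty)
    (hYr : Y.card + 2 ≤ r) (hY : ∀ p ∈ T, φ p.1 ∩ B = Y) : T.card < r := by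
  by_contra! hTr
  obtain ⟨p₁, hp₁, p₂, hp₂, hp⟩ := Finset.one_lt_card.mp (show 1 < T.card by omega)
  obtain ⟨s, hs⟩ := hY0
  have hmemB : ∀ p ∈ T, ∀ x ∈ p.2, x ∉ B := fun p hpT x hx =>
    Finset.disjoint_left.mp (hT p hpT).disjoint hx
  have hfst : ∀ p ∈ T, p.1 ∈ p.2 := fun p hpT => (hT p hpT).mem
  have hYB : ∀ y ∈ Y, y ∈ B := by
    intro y hy
    rw [← hY p₁ hp₁] at hy
    exact (Finset.mem_inter.mp hy).2
  have hYφ : ∀ p ∈ T, Y ⊆ φ p.1 := by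
    intro p hpT
    rw [← hY p hpT]
    exact Finset.inter_subset_left
  have hlarge : ∀ p ∈ T, r ≤ Y.card + p.2.card := by
    intro p hpT
    obtain ⟨a, m, -, -, -, -, -, -, hsub⟩ := hT p hpT
    have h1 := Finset.card_sdiff_add_card_inter (φ p.1) B
    rw [hY p hpT, hunif _ (hφ _ (hmemB p hpT _ (hfst p hpT))).1] at h1
    have := Finset.card_le_card hsub
    omega
  set T' := (T.erase p₁).erase p₂ with hT'
  have hT'm : ∀ p ∈ T', p ∈ T ∧ p ≠ p₁ ∧ p ≠ p₂ := by
    intro p hpT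
    simp only [hT', Finset.mem_erase] at hpT
    tauto
  set G := T'.image (fun p => φ p.1) with hG
  have hGcard : G.card = T.card - 2 := by
    rw [hG, Finset.card_image_of_injOn, hT', Finset.card_erase_of_mem, Finset.card_erase_of_mem hp₁]
    · omega
    · exact Finset.mem_erase.mpr ⟨hp.symm, hp₂⟩
    · intro p hpT p' hpT' hpp
      have h1 := (hT'm p hpT).1
      have h2 := (hT'm p' hpT').1
      by_contra hne
      have := hinj _ (hmemB p h1 _ (hfst p h1)) _ (hmemB p' h2 _ (hfst p' h2)) hpp
      exact Finset.disjoint_left.mp (hdisj p h1 p' h2 hne) (hfst p h1) (this ▸ hfst p' h2)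
  have hGZ : ∀ p ∈ T, (p = p₁ ∨ p = p₂) → ∀ x ∈ p.2, φ x ∉ G := by
    intro p hpT hpp x hx hxG
    obtain ⟨p', hp', hpx⟩ := Finset.mem_image.mp hxG
    obtain ⟨h1, h2, h3⟩ := hT'm p' hp'
    have := hinj _ (hmemB p' h1 _ (hfst p' h1)) _ (hmemB p hpT _ hx) hpx
    refine Finset.disjoint_left.mp (hdisj p' h1 p hpT ?_) (hfst p' h1) (this ▸ hx)
    rintro rfl
    tauto
  have hsub₁ := hmemB p₁ hp₁
  have hsub₂ := hmemB p₂ hp₂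
  have hl₁ := hlarge p₁ hp₁
  have hl₂ := hlarge p₂ hp₂
  have hY₁ := hYφ p₁ hp₁
  have hY₂ := hYφ p₂ hp₂
  have hd := hdisj p₁ hp₁ p₂ hp₂ hp
  have hG₁ := hGZ p₁ hp₁ (Or.inl rfl)
  have hG₂ := hGZ p₂ hp₂ (Or.inr rfl)
  obtain ⟨a₁, m₁, hq₁, hZ₁, hnd₁, hc₁, ha₁, -, -⟩ := hT p₁ hp₁
  obtain ⟨a₂, m₂, hq₂, hZ₂, hnd₂, hc₂, ha₂, -, -⟩ := hT p₂ hp₂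
  have hm₁ : ∀ x ∈ a₁ :: m₁, x ∈ p₁.2 := fun x hx => hZ₁ ▸ List.mem_toFinset.mpr hx
  have hm₂ : ∀ x ∈ a₂ :: m₂, x ∈ p₂.2 := fun x hx => hZ₂ ▸ List.mem_toFinset.mpr hx
  have hq₁Z : p₁.1 ∈ p₁.2 := hfst p₁ hp₁
  rw [← hZ₁, List.toFinset_card_of_nodup hnd₁, List.length_cons] at hl₁
  rw [← hZ₂, List.toFinset_card_of_nodup hnd₂, List.length_cons] at hl₂
  have h1 := pathFrom_of_isChain (E := E) (X := p₁.2) (F := (p₁.2.erase p₁.1).image φ) hc₁ hnd₁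
    (fun x hx => hφ x (hsub₁ x (hm₁ x hx)))
    (fun x hx y hy => hinj x (hsub₁ x (hm₁ x hx)) y (hsub₁ y (hm₁ y hy))) hm₁
    (fun x hx hne => Finset.mem_image_of_mem _ (Finset.mem_erase.mpr ⟨hq₁ ▸ hne, hm₁ x hx⟩))
  have h2 : PathFrom E s (m₁.length + 1) (insert s p₁.2) (p₁.2.image φ) :=
    h1.cons (w := s) (e := φ p₁.1) (fun h => hsub₁ s h (hYB s hs))
      (hφ _ (hsub₁ _ hq₁Z)).1 (by
        intro h
        obtain ⟨x, hx, hxq⟩ := Finset.mem_image.mp h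
        rw [Finset.mem_erase] at hx
        exact hx.1 (hinj x (hsub₁ x hx.2) _ (hsub₁ _ hq₁Z) hxq)) ha₁ (hY₁ hs) subset_rfl
      (Finset.insert_subset (Finset.mem_image_of_mem _ hq₁Z)
        (Finset.image_subset_image (Finset.erase_subset _ _)))
  obtain ⟨t, ht, h3⟩ := h2.weave (G := G) (Y := Y.erase s)
    (by
      intro e he
      obtain ⟨p, hpT, rfl⟩ := Finset.mem_image.mp he
      have := (hT'm p hpT).1
      exact (hφ _ (hmemB p this _ (hfst p this))).1)
    (by
      intro e he
      obtain ⟨p, hpT, rfl⟩ := Finset.mem_image.mp he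
      have := hYφ p (hT'm p hpT).1
      exact ⟨this hs, (Finset.erase_subset _ _).trans this⟩)
    (by
      rw [Finset.disjoint_right]
      intro e he
      obtain ⟨x, hx, rfl⟩ := Finset.mem_image.mp he
      exact hG₁ x hx)
    (by
      rw [Finset.disjoint_left]
      intro x hx hx'
      rw [Finset.mem_erase] at hx
      exact hsub₁ x ((Finset.mem_insert.mp hx').resolve_left hx.1) (hYB x hx.2))
    (by rw [Finset.card_erase_of_mem hs]; omega)
  rw [Finset.insert_erase hs] at ht
  have hX : ∀ x ∈ p₂.2, x ∉ insert s p₁.2 ∪ Y.erase s := by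
    intro x hx h
    simp only [Finset.mem_union, Finset.mem_insert, Finset.mem_erase] at h
    rcases h with (rfl | h) | h
    · exact hsub₂ x hx (hYB x hs)
    · exact Finset.disjoint_left.mp hd h hx
    · exact hsub₂ x hx (hYB x h.2)
  have hF : ∀ x ∈ p₂.2, φ x ∉ p₁.2.image φ ∪ G := by
    intro x hx h
    rcases Finset.mem_union.mp h with h | h
    · obtain ⟨y, hy, hyx⟩ := Finset.mem_image.mp h
      exact Finset.disjoint_left.mp hd hy (hinj y (hsub₁ y hy) x (hsub₂ x hx) hyx ▸ hx)
    · exact hG₂ x hx h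
  have hq₂Z : p₂.1 ∈ p₂.2 := hfst p₂ hp₂
  have h4 := h3.cons_insert (w := a₂) (e := φ p₂.1) (hX a₂ (hm₂ a₂ (by simp)))
    (hφ _ (hsub₂ _ hq₂Z)).1 (hF _ hq₂Z) (hY₂ ht) ha₂
  have h5 := h4.append_walk (X' := insert a₂ (insert s p₁.2 ∪ Y.erase s) ∪ p₂.2)
    (F' := insert (φ p₂.1) (p₁.2.image φ ∪ G) ∪ p₂.2.image φ) hc₂ hnd₂
    (fun x hx => hφ x (hsub₂ x (hm₂ x hx)))
    (fun x hx y hy => hinj x (hsub₂ x (hm₂ x hx)) y (hsub₂ y (hm₂ y hy)))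
    (fun x hx h => by
      rcases Finset.mem_insert.mp h with rfl | h
      · exact (List.nodup_cons.mp hnd₂).1 hx
      · exact hX x (hm₂ x (List.mem_cons_of_mem _ hx)) h)
    (fun x hx hne h => by
      rcases Finset.mem_insert.mp h with h | h
      · exact hne ((hinj x (hsub₂ x (hm₂ x hx)) _ (hsub₂ _ hq₂Z) h).trans hq₂.symm)
      · exact hF x (hm₂ x hx) h)
    Finset.subset_union_left
    (fun x hx => Finset.mem_union_right _ (hm₂ x (List.mem_cons_of_mem _ hx)))
    Finset.subset_union_left
    (fun x hx => Finset.mem_union_right _ (Finset.mem_image_of_mem _ (hm₂ x hx)))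
  have h6 := hpath _ _ _ _ h5
  have h7 : 0 < Y.card := Finset.card_pos.mpr ⟨s, hs⟩
  rw [Finset.card_erase_of_mem hs] at h6
  omega

end Matching

section Rounds

variable {α : Type*} [DecidableEq α] {E : Finset (Finset α)} {φ : α → Finset α}
  {r R : ℕ}

theorem card_family_le (hr : 2 ≤ r) (hunif : ∀ e ∈ E, e.card = r)
    (hpath : ∀ v k X F, PathFrom E v k X F → k ≤ r) (hE : NoLongCycle E r)
    (hpoor : ∀ S : Finset α, S.card + 1 = r → (E.filter (S ⊆ ·)).card ≤ R)
    {B : Finset α} (hφ : ∀ v ∉ B, φ v ∈ E ∧ v ∈ φ v)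
    (hinj : ∀ u ∉ B, ∀ v ∉ B, φ u = φ v → u = v)
    {T : Finset (α × Finset α)} (hT : ∀ p ∈ T, Terminal φ B p.1 p.2)
    (hdisj : ∀ p ∈ T, ∀ p' ∈ T, p ≠ p' → Disjoint p.2 p'.2) :
    T.card ≤ (R + r) * 2 ^ B.card := by
  have hmaps : ∀ p ∈ T, φ p.1 ∩ B ∈ B.powerset := fun p _ =>
    Finset.mem_powerset.mpr Finset.inter_subset_right
  have hfst : ∀ p ∈ T, p.1 ∉ B := fun p hpT =>
    Finset.disjoint_left.mp (hT p hpT).disjoint (hT p hpT).mem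
  have hfiber : ∀ Y ∈ B.powerset, (T.filter fun p => φ p.1 ∩ B = Y).card ≤ R + r := by
    intro Y _
    have hsub := Finset.filter_subset (fun p => φ p.1 ∩ B = Y) T
    have hmem : ∀ p ∈ T.filter (fun p => φ p.1 ∩ B = Y), φ p.1 ∩ B = Y := fun p hpT =>
      (Finset.mem_filter.mp hpT).2
    generalize T.filter (fun p => φ p.1 ∩ B = Y) = T' at hsub hmem
    rcases T'.eq_empty_or_nonempty with rfl | ⟨p, hpT'⟩
    · simp
    have hpT := hsub hpT'
    have hYne : Y.Nonempty := hmem p hpT' ▸ (hT p hpT).inter_nonempty hE hunif hφ hinj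
    rcases le_or_gt (Y.card + 2) r with hYr | hYr
    · have := no_many_terminals hr hunif hpath hφ hinj (fun p hp => hT p (hsub hp))
        (fun p hp p' hp' => hdisj p (hsub hp) p' (hsub hp')) hYne hYr hmem
      omega
    · have hlt : Y.card < r := by
        rw [← hmem p hpT', ← hunif _ (hφ _ (hfst p hpT)).1]
        refine Finset.card_lt_card ⟨Finset.inter_subset_left, fun h => hfst p hpT ?_⟩
        exact (Finset.mem_inter.mp (h (hφ _ (hfst p hpT)).2)).2
      refine le_trans ?_ ((hpoor Y (by omega)).trans (Nat.le_add_right _ _))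
      refine Finset.card_le_card_of_injOn (fun p => φ p.1) ?_ ?_
      · intro p hp
        rw [Finset.mem_coe, Finset.mem_filter]
        exact ⟨(hφ _ (hfst p (hsub hp))).1, hmem p hp ▸ Finset.inter_subset_left⟩
      · intro p hp p' hp' hpp
        have h1 := hsub hp
        have h2 := hsub hp'
        by_contra hne
        have := hinj _ (hfst p h1) _ (hfst p' h2) hpp
        exact Finset.disjoint_left.mp (hdisj p h1 p' h2 hne) (hT p h1).mem (this ▸ (hT p' h2).mem)
  refine (Finset.card_le_mul_card_image_of_maps_to hmaps _ hfiber).trans ?_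
  rw [Finset.card_powerset]

variable [Fintype α]

/-- The bound on the size of a vertex set after absorbing a maximal family of terminal cycles. -/
def absorbBound (r R b : ℕ) : ℕ := b + (R + r) * 2 ^ b * (r + 1)

theorem absorbBound_mono (r R : ℕ) : Monotone (absorbBound r R) := by
  intro a b hab
  unfold absorbBound
  gcongr
  norm_num

theorem exists_absorb (hr : 2 ≤ r) (hunif : ∀ e ∈ E, e.card = r)
    (hpath : ∀ v k X F, PathFrom E v k X F → k ≤ r) (hE : NoLongCycle E r)
    (hpoor : ∀ S : Finset α, S.card + 1 = r → (E.filter (S ⊆ ·)).card ≤ R)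
    {B : Finset α} (hφ : ∀ v ∉ B, φ v ∈ E ∧ v ∈ φ v)
    (hinj : ∀ u ∉ B, ∀ v ∉ B, φ u = φ v → u = v) :
    ∃ B', B ⊆ B' ∧ B'.card ≤ absorbBound r R B.card ∧
      (∀ v ∈ B', v ∉ B → ∃ q Z, Terminal φ B q Z ∧ v ∈ Z ∧ Z ⊆ B') ∧
      ∀ q Z, Terminal φ B q Z → ¬ Disjoint Z B' := by
  classical
  obtain ⟨T, hT, hmax⟩ := Finset.exists_max_image
    (Finset.univ.filter fun T : Finset (α × Finset α) => (∀ p ∈ T, Terminal φ B p.1 p.2) ∧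
      ∀ p ∈ T, ∀ p' ∈ T, p ≠ p' → Disjoint p.2 p'.2) Finset.card ⟨∅, by simp⟩
  simp only [Finset.mem_filter, Finset.mem_univ, true_and] at hT hmax
  obtain ⟨hT, hdisj⟩ := hT
  refine ⟨B ∪ T.biUnion Prod.snd, Finset.subset_union_left, ?_, ?_, ?_⟩
  · refine (Finset.card_union_le _ _).trans (Nat.add_le_add_left ?_ _)
    refine (Finset.card_biUnion_le_card_mul _ _ (r + 1) ?_).trans (Nat.mul_le_mul_right _
      (card_family_le hr hunif hpath hE hpoor hφ hinj hT hdisj))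
    intro p hp
    have hB : ∀ x ∈ p.2, x ∉ B := fun x hx => Finset.disjoint_left.mp (hT p hp).disjoint hx
    obtain ⟨a, m, -, hZ, hnd, hc, -⟩ := hT p hp
    have hm : ∀ x ∈ a :: m, x ∉ B := fun x hx => hB x (hZ ▸ List.mem_toFinset.mpr hx)
    have := hpath _ _ _ _ (pathFrom_of_isChain (E := E) (X := Finset.univ) (F := Finset.univ) hc hnd
      (fun x hx => hφ x (hm x hx)) (fun x hx y hy => hinj x (hm x hx) y (hm y hy))
      (by simp) (by simp))
    rw [← hZ, List.toFinset_card_of_nodup hnd, List.length_cons]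
    omega
  · intro v hv hvB
    obtain ⟨p, hp, hvp⟩ := Finset.mem_biUnion.mp ((Finset.mem_union.mp hv).resolve_left hvB)
    exact ⟨p.1, p.2, hT p hp, hvp,
      (Finset.subset_biUnion_of_mem Prod.snd hp).trans Finset.subset_union_right⟩
  · intro q Z hqZ hZ
    have hZT : ∀ p ∈ T, Disjoint Z p.2 := fun p hp =>
      hZ.mono_right ((Finset.subset_biUnion_of_mem Prod.snd hp).trans Finset.subset_union_right)
    have hnot : (q, Z) ∉ T := fun h =>
      Finset.disjoint_left.mp (hZT _ h) hqZ.mem hqZ.mem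
    have := hmax (insert (q, Z) T) ⟨by
      intro p hp
      rcases Finset.mem_insert.mp hp with rfl | hp
      · exact hqZ
      · exact hT p hp, by
      intro p hp p' hp' hne
      rcases Finset.mem_insert.mp hp with rfl | hp <;>
        rcases Finset.mem_insert.mp hp' with rfl | hp'
      · exact (hne rfl).elim
      · exact hZT p' hp'
      · exact (hZT p hp).symm
      · exact hdisj p hp p' hp' hne⟩
    rw [Finset.card_insert_of_notMem hnot] at this
    omega

theorem exists_iterated_absorb (hr : 2 ≤ r) (hunif : ∀ e ∈ E, e.card = r)
    (hpath : ∀ v k X F, PathFrom E v k X F → k ≤ r) (hE : NoLongCycle E r)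
    (hpoor : ∀ S : Finset α, S.card + 1 = r → (E.filter (S ⊆ ·)).card ≤ R)
    {D : Finset α} (hφ : ∀ v ∉ D, φ v ∈ E ∧ v ∈ φ v)
    (hinj : ∀ u ∉ D, ∀ v ∉ D, φ u = φ v → u = v) (t : ℕ) :
    ∃ B B', D ⊆ B ∧ B ⊆ B' ∧ B'.card ≤ (absorbBound r R)^[t + 1] D.card ∧
      (∀ v ∈ B', v ∉ B → ∃ k, t ≤ k ∧ PathFrom E v k B' ((B' \ D).image φ)) ∧
      ∀ q Z, Terminal φ B q Z → ¬ Disjoint Z B' := by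
  induction t with
  | zero =>
    obtain ⟨B', hDB, hcard, -, hter⟩ := exists_absorb hr hunif hpath hE hpoor hφ hinj
    exact ⟨D, B', subset_rfl, hDB, hcard, fun v hv _ => ⟨0, le_rfl, .nil hv⟩, hter⟩
  | succ t ih =>
    obtain ⟨B, B', hDB, hBB', hcard, hlong, hter⟩ := ih
    have hD : ∀ v ∉ B', v ∉ D := fun v hv h => hv (hBB' (hDB h))
    obtain ⟨B'', hBB'', hcard', hmem, hter'⟩ := exists_absorb hr hunif hpath hE hpoor
      (fun v hv => hφ v (hD v hv)) (fun u hu v hv => hinj u (hD u hu) v (hD v hv))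
    refine ⟨B', B'', hDB.trans hBB', hBB'', ?_, ?_, hter'⟩
    · rw [Function.iterate_succ_apply']
      exact hcard'.trans (absorbBound_mono r R hcard)
    · intro v hv hvB
      obtain ⟨q, Z, hqZ, hvZ, hZB⟩ := hmem v hv hvB
      have hZ' := hqZ.disjoint
      obtain ⟨z, hzq, hzB', hzB⟩ : ∃ z ∈ φ q, z ∈ B' ∧ z ∉ B := by
        by_contra! hcon
        obtain ⟨a, m, h1, h2, h3, h4, h5, h6, h7⟩ := hqZ
        refine hter q Z ⟨a, m, h1, h2, h3, h4, h5, h6.mono_right hBB', fun x hx => h7 ?_⟩ h6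
        rw [Finset.mem_sdiff] at hx ⊢
        exact ⟨hx.1, fun h => hx.2 (hcon x hx.1 h)⟩
      obtain ⟨k, htk, hk⟩ := hlong z hzB' hzB
      obtain ⟨a, m, rfl, rfl, hnd, hc, -⟩ := hqZ
      obtain ⟨s, m', hs⟩ := List.append_of_mem (List.mem_toFinset.mp hvZ)
      have hlast : m'.getLastD v = m.getLastD a := by
        have := congrArg (fun l => List.getLastD l v) hs
        simp only [List.getLastD_eq_getLast?, List.getLast?_append, List.getLast?_cons] at this ⊢
        simpa using this.symm
      have hsub : ∀ x ∈ v :: m', x ∈ (a :: m).toFinset := fun x hx => by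
        rw [List.mem_toFinset, hs]
        exact List.mem_append_right _ hx
      have hsubB : ∀ x ∈ v :: m', x ∉ B' := fun x hx =>
        Finset.disjoint_left.mp hZ' (hsub x hx)
      rw [hs] at hnd hc
      refine ⟨k + m'.length + 1, by omega, hk.prepend hc.right_of_append (hlast ▸ hzq)
        (List.nodup_append.mp hnd).2.1 (fun x hx => hφ x (hD x (hsubB x hx)))
        (fun x hx y hy => hinj x (hD x (hsubB x hx)) y (hD y (hsubB y hy))) hsubB ?_ hBB''
        (fun x hx => hZB (hsub x hx))
        (Finset.image_subset_image (Finset.sdiff_subset_sdiff hBB'' subset_rfl)) ?_⟩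
      · intro x hx h
        obtain ⟨y, hy, hyx⟩ := Finset.mem_image.mp h
        rw [Finset.mem_sdiff] at hy
        exact hsubB x hx (hinj y hy.2 x (hD x (hsubB x hx)) hyx ▸ hy.1)
      · intro x hx
        exact Finset.mem_image_of_mem _
          (Finset.mem_sdiff.mpr ⟨hZB (hsub x hx), hD x (hsubB x hx)⟩)

theorem card_le_of_matching (hr : 2 ≤ r) (hunif : ∀ e ∈ E, e.card = r)
    (hpath : ∀ v k X F, PathFrom E v k X F → k ≤ r) (hE : NoLongCycle E r)
    (hpoor : ∀ S : Finset α, S.card + 1 = r → (E.filter (S ⊆ ·)).card ≤ R)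
    {D : Finset α} (hφ : ∀ v ∉ D, φ v ∈ E ∧ v ∈ φ v)
    (hinj : ∀ u ∉ D, ∀ v ∉ D, φ u = φ v → u = v) :
    Fintype.card α ≤ (absorbBound r R)^[r + 2] D.card := by
  obtain ⟨B, B', hDB, hBB', hcard, hlong, hter⟩ :=
    exists_iterated_absorb hr hunif hpath hE hpoor hφ hinj (r + 1)
  obtain rfl : B = B' := by
    refine hBB'.antisymm fun v hv => ?_
    by_contra hvB
    obtain ⟨k, hk, h⟩ := hlong v hv hvB
    have := hpath _ _ _ _ h
    omega
  refine le_trans ?_ hcard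
  rw [← Finset.card_univ]
  refine Finset.card_le_card fun v _ => ?_
  by_contra hv
  obtain ⟨q, Z, h⟩ := exists_terminal (fun v hv => (hφ v fun h => hv (hDB h)).2) hv
  exact hter q Z h h.disjoint

theorem card_add_le (hr : 2 ≤ r) (hunif : ∀ e ∈ E, e.card = r) (hlink : Linked E)
    (hpath : ∀ v k X F, PathFrom E v k X F → k ≤ r)
    (hn₁ : 2 * (r + 1 + (r + 3) * 2 ^ (r + 1)) + 2 * r ≤ Fintype.card α)
    (hn₂ : (absorbBound r (r + 3))^[r + 2] r < Fintype.card α) :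
    E.card + r ≤ Fintype.card α + 1 := by
  by_contra! hlt
  have hpoor : ∀ S : Finset α, S.card + 1 = r → (E.filter (S ⊆ ·)).card ≤ r + 3 := by
    intro S hS
    by_contra! h
    have := card_add_le_of_rich hr hunif hlink hpath hS h
    omega
  have hE : NoLongCycle E r := by
    intro φ a m hc hnd hφ hinj
    by_contra! hlen
    have := two_mul_card_le_of_long_cycle hr hunif hlink hpath hpoor hc hnd hφ hinj hlen
    omega
  obtain ⟨φ, D, hD, hφ, hinj⟩ := exists_partial_matching E Finset.univ r (by
    intro s _
    have h1 := Finset.card_filter_add_card_filter_not (s := E) (fun e => ¬ Disjoint e s)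
    have h2 : (E.filter fun e => ¬ ¬ Disjoint e s) = E.filter (· ⊆ sᶜ) :=
      Finset.filter_congr fun e _ => by rw [not_not, Finset.subset_compl_iff_disjoint_right]
    have h3 := card_filter_subset_le hE (by omega) hunif sᶜ
    have h4 := Finset.card_add_card_compl s
    rw [h2] at h1
    omega)
  have h1 := card_le_of_matching (φ := φ) hr hunif hpath hE hpoor
    (fun v => hφ v (Finset.mem_univ _))
    (fun u hu v => hinj u (Finset.mem_univ _) hu v (Finset.mem_univ _))
  have h2 := (absorbBound_mono r (r + 3)).iterate (r + 2) hD
  omega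

end Rounds

section Construction

/-- The hypergraph of all `r`-sets containing a fixed `(r - 1)`-set. -/
def star (n r : ℕ) : Finset (Finset (Fin n)) :=
  (Finset.univ.filter fun i : Fin n => i.val < r - 1)ᶜ.image
    fun w => insert w (Finset.univ.filter fun i : Fin n => i.val < r - 1)

variable {n r : ℕ}

theorem card_core (hn : r ≤ n) :
    (Finset.univ.filter fun i : Fin n => i.val < r - 1).card = r - 1 := by
  rw [Fin.card_filter_val_lt]
  omega

theorem card_star (hr : 1 ≤ r) (hn : r ≤ n) : (star n r).card = n - r + 1 := by
  rw [star, Finset.card_image_of_injOn, Finset.card_compl, card_core hn, Fintype.card_fin]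
  · omega
  · intro x hx y hy hxy
    have h : x ∈ insert y (Finset.univ.filter fun i : Fin n => i.val < r - 1) := by
      refine Eq.subset hxy ?_
      exact Finset.mem_insert_self _ _
    exact (Finset.mem_insert.mp h).resolve_right (Finset.mem_compl.mp hx)

theorem uniform_star (hr : 1 ≤ r) (hn : r ≤ n) : Uniform (star n r) r := by
  intro e he
  obtain ⟨w, hw, rfl⟩ := Finset.mem_image.mp he
  rw [Finset.card_insert_of_notMem (Finset.mem_compl.mp hw), card_core hn]
  omega

theorem mem_core_of_mem_of_mem {x : Fin n} {e f : Finset (Fin n)} (he : e ∈ star n r)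
    (hf : f ∈ star n r) (hef : e ≠ f) (hxe : x ∈ e) (hxf : x ∈ f) :
    x ∈ Finset.univ.filter fun i : Fin n => i.val < r - 1 := by
  obtain ⟨u, -, rfl⟩ := Finset.mem_image.mp he
  obtain ⟨w, -, rfl⟩ := Finset.mem_image.mp hf
  by_contra hx
  have h1 := (Finset.mem_insert.mp hxe).resolve_right hx
  have h2 := (Finset.mem_insert.mp hxf).resolve_right hx
  exact hef (by rw [← h1, ← h2])

theorem bpFree_star (hr : 1 ≤ r) (hn : r ≤ n) : BPFree (star n r) (r + 1) := by
  rintro ⟨v, f, hv, hf, hfE, hvf⟩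
  have h := Finset.card_le_card_of_injOn (s := (Finset.univ : Finset (Fin r)))
    (t := Finset.univ.filter fun i : Fin n => i.val < r - 1)
    (fun i => v i.succ.castSucc) (by
      intro i _
      refine mem_core_of_mem_of_mem (hfE i.castSucc) (hfE i.succ) (fun h => ?_)
        (hvf i.castSucc).2 (hvf i.succ).1
      exact (Fin.castSucc_lt_succ (i := i)).ne (hf h))
    (fun i _ j _ h => Fin.succ_injective _ (Fin.castSucc_injective _ (hv h)))
  rw [card_core hn, Finset.card_univ, Fintype.card_fin] at h
  omega

theorem isBergePath_one {E : Finset (Finset (Fin n))} {x y : Fin n} {e : Finset (Fin n)}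
    (hxy : x ≠ y) (he : e ∈ E) (hx : x ∈ e) (hy : y ∈ e) :
    IsBergePath E 1 ![x, y] ![e] := by
  refine ⟨?_, Function.injective_of_subsingleton _, by simpa, by simp [hx, hy]⟩
  intro i j h
  fin_cases i <;> fin_cases j <;> simp_all

theorem isBergePath_two {E : Finset (Finset (Fin n))} {x y z : Fin n} {e f : Finset (Fin n)}
    (hxy : x ≠ y) (hyz : y ≠ z) (hxz : x ≠ z) (hef : e ≠ f) (he : e ∈ E) (hf : f ∈ E)
    (hx : x ∈ e) (hy : y ∈ e) (hy' : y ∈ f) (hz : z ∈ f) :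
    IsBergePath E 2 ![x, y, z] ![e, f] := by
  refine ⟨?_, ?_, by simp [Fin.forall_fin_two, he, hf],
    by simp [Fin.forall_fin_two, hx, hy, hy', hz]⟩
  · intro i j h
    fin_cases i <;> fin_cases j <;> simp_all
  · intro i j h
    fin_cases i <;> fin_cases j <;> simp_all

theorem connected_star (hr : 2 ≤ r) (hn : r ≤ n) : Connected (star n r) := by
  set S := Finset.univ.filter fun i : Fin n => i.val < r - 1 with hS
  have hmem : ∀ w ∉ S, insert w S ∈ star n r := fun w hw =>
    Finset.mem_image_of_mem _ (Finset.mem_compl.mpr hw)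
  obtain ⟨w, hw⟩ : ∃ w, w ∉ S := ⟨⟨r - 1, by omega⟩, by simp [hS]⟩
  obtain ⟨s, hs⟩ : ∃ s, s ∈ S := ⟨⟨0, by omega⟩, by simp [hS]; omega⟩
  intro x y
  by_cases hxy : x = y
  · subst hxy
    exact ⟨0, ![x], ![], ⟨fun i j _ => Fin.ext (by omega), fun i => i.elim0,
      fun i => i.elim0, fun i => i.elim0⟩,
      ⟨0, rfl⟩, ⟨0, rfl⟩⟩
  · by_cases hx : x ∈ S
    · by_cases hy : y ∈ S
      · exact ⟨1, _, _, isBergePath_one hxy (hmem w hw) (Finset.mem_insert_of_mem hx)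
          (Finset.mem_insert_of_mem hy), ⟨0, rfl⟩, ⟨1, rfl⟩⟩
      · exact ⟨1, _, _, isBergePath_one hxy (hmem y hy) (Finset.mem_insert_of_mem hx)
          (Finset.mem_insert_self _ _), ⟨0, rfl⟩, ⟨1, rfl⟩⟩
    · by_cases hy : y ∈ S
      · exact ⟨1, _, _, isBergePath_one hxy (hmem x hx) (Finset.mem_insert_self _ _)
          (Finset.mem_insert_of_mem hy), ⟨0, rfl⟩, ⟨1, rfl⟩⟩
      · refine ⟨2, _, _, isBergePath_two (y := s) (by rintro rfl; exact hx hs)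
          (by rintro rfl; exact hy hs) hxy
          (fun h => ?_) (hmem x hx) (hmem y hy) (Finset.mem_insert_self _ _)
          (Finset.mem_insert_of_mem hs) (Finset.mem_insert_of_mem hs)
          (Finset.mem_insert_self _ _), ⟨0, rfl⟩, ⟨2, rfl⟩⟩
        have h' : x ∈ insert y S := h ▸ Finset.mem_insert_self x S
        exact hx ((Finset.mem_insert.mp h').resolve_left hxy)

end Construction

theorem stmt10 (r : ℕ) (hr : 3 ≤ r) :
    ∃ N : ℕ, ∀ n : ℕ, N ≤ n → exConn n r (r + 1) = n - r + 1 := by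
  refine ⟨2 * (r + 1 + (r + 3) * 2 ^ (r + 1)) + 2 * r + (absorbBound r (r + 3))^[r + 2] r + 1,
    fun n hn => ?_⟩
  refine IsGreatest.csSup_eq ⟨⟨star n r, uniform_star (by omega) (by omega),
    connected_star (by omega) (by omega), bpFree_star (by omega) (by omega),
    card_star (by omega) (by omega)⟩, ?_⟩
  rintro m ⟨E, hunif, hconn, hfree, rfl⟩
  have hlink : Linked E := hconn.linked fun e he => Finset.card_pos.mp (by rw [hunif e he]; omega)
  have := card_add_le (by omega) hunif hlink (fun v k X F => hfree.le_of_pathFrom)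
    (by rw [Fintype.card_fin]; omega) (by rw [Fintype.card_fin]; omega)
  rw [Fintype.card_fin] at this
  omega

end Berge
end
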